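/- Let n₀,n₁,n₂,n₃ ∈ ℂ and let p(τ), A(τ) be holomorphic functions on an open connected subset V ⊆ ℍ with 2p(τ) ∉ Λ_τ and p(τ) + ω_k/2 ∉ Λ_τ for all k and τ ∈ V, and let B(τ) = A² − ζ(2p|τ)A − (3/4)℘(2p|τ) − Σ_k n_k(n_k+1)℘(p + ω_k/2|τ). Define Ω(z;τ) = (−i/(4π))(ζ(z−p|τ) + ζ(z+p|τ) − 2zη₁(τ)) and U(z;τ) = ∂³Ω/∂z³ − 4I(z;τ)∂Ω/∂z − 2(∂I/∂z)Ω + 2∂I/∂τ. Then U(z;τ) = 0 for all τ ∈ V and all z outside the singular set if and only if (p(τ), A(τ)) satisfies the Hamiltonian system on V. -/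

import Mathlib

open Complex Filter Topology Asymptotics

noncomputable section

/-- membership in the lattice `Λ_τ = ℤ + τℤ`. -/
def InLattice (τ z : ℂ) : Prop := ∃ m n : ℤ, z = (m : ℂ) + (n : ℂ) * τ

/-- the half-period generators `ω₀ = 0, ω₁ = 1, ω₂ = τ, ω₃ = 1 + τ`. -/
def halfp (τ : ℂ) : Fin 4 → ℂ := ![0, 1, τ, 1 + τ]

/-- the Weierstrass elliptic function `℘(z|τ)`. -/
def wp (τ z : ℂ) : ℂ :=
  z⁻¹ ^ 2 + ∑' w : {w : ℤ × ℤ // w ≠ 0},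
    ((z - ((w.1.1 : ℂ) + (w.1.2 : ℂ) * τ))⁻¹ ^ 2 - ((w.1.1 : ℂ) + (w.1.2 : ℂ) * τ)⁻¹ ^ 2)

/-- `℘′(z|τ)`, the `z`-derivative of `℘`. -/
def wpd (τ z : ℂ) : ℂ := deriv (wp τ) z

/-- `℘″(z|τ)`. -/
def wpdd (τ z : ℂ) : ℂ := deriv (wpd τ) z

def e1 (τ : ℂ) : ℂ := wp τ (1 / 2)
def e2 (τ : ℂ) : ℂ := wp τ (τ / 2)
def e3 (τ : ℂ) : ℂ := wp τ ((1 + τ) / 2)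

def g2 (τ : ℂ) : ℂ := -4 * (e1 τ * e2 τ + e1 τ * e3 τ + e2 τ * e3 τ)

/-- `zeta` is the Weierstrass zeta function: for each `τ ∈ ℍ`, `zeta τ` is odd, satisfies
`∂ζ/∂z = -℘` off the lattice, and `ζ(z|τ) - 1/z → 0` as `z → 0`. -/
def IsWeierstrassZeta (zeta : ℂ → ℂ → ℂ) : Prop :=
  ∀ τ : ℂ, 0 < τ.im →
    (∀ z : ℂ, zeta τ (-z) = - zeta τ z) ∧
    (∀ z : ℂ, ¬ InLattice τ z → HasDerivAt (zeta τ) (- wp τ z) z) ∧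
    Tendsto (fun z => zeta τ z - z⁻¹) (𝓝[≠] (0 : ℂ)) (𝓝 0)

/-- `eta1 τ = ζ(z+1|τ) - ζ(z|τ)` is the first quasi-period. -/
def IsEta1 (zeta : ℂ → ℂ → ℂ) (eta1 : ℂ → ℂ) : Prop :=
  ∀ τ : ℂ, 0 < τ.im → ∀ z : ℂ, ¬ InLattice τ z →
    eta1 τ = zeta τ (z + 1) - zeta τ z

/-- `eta2 τ = ζ(z+τ|τ) - ζ(z|τ)` is the second quasi-period. -/
def IsEta2 (zeta : ℂ → ℂ → ℂ) (eta2 : ℂ → ℂ) : Prop :=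
  ∀ τ : ℂ, 0 < τ.im → ∀ z : ℂ, ¬ InLattice τ z →
    eta2 τ = zeta τ (z + τ) - zeta τ z

/-- `sigma` is the Weierstrass sigma function: entire, odd, with
`∂/∂z log σ = ζ` off the lattice and `σ(z|τ)/z → 1` as `z → 0`. -/
def IsWeierstrassSigma (zeta sigma : ℂ → ℂ → ℂ) : Prop :=
  ∀ τ : ℂ, 0 < τ.im →
    (∀ z : ℂ, sigma τ (-z) = - sigma τ z) ∧
    Differentiable ℂ (sigma τ) ∧
    (∀ z : ℂ, ¬ InLattice τ z → HasDerivAt (sigma τ) (zeta τ z * sigma τ z) z) ∧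
    Tendsto (fun z => sigma τ z / z) (𝓝[≠] (0 : ℂ)) (𝓝 1)

/-- the Hamiltonian system (142) for `(p(τ), A(τ))` on `V`. -/
def HamSystem (n : Fin 4 → ℂ) (zeta : ℂ → ℂ → ℂ) (eta1 : ℂ → ℂ)
    (V : Set ℂ) (p A : ℂ → ℂ) : Prop :=
  ∀ τ ∈ V,
    HasDerivAt p ((-Complex.I / (4 * (Real.pi : ℂ))) *
      (2 * A τ - zeta τ (2 * p τ) + 2 * p τ * eta1 τ)) τ ∧
    HasDerivAt A ((Complex.I / (4 * (Real.pi : ℂ))) *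
      ((2 * wp τ (2 * p τ) + 2 * eta1 τ) * A τ - (3 / 2) * wpd τ (2 * p τ)
        - ∑ k : Fin 4, n k * (n k + 1) * wpd τ (p τ + halfp τ k / 2))) τ

/-- the generalized Lamé potential `I(z;τ)`. -/
def Ipot (n : Fin 4 → ℂ) (zeta : ℂ → ℂ → ℂ) (A B p τ z : ℂ) : ℂ :=
  (∑ k : Fin 4, n k * (n k + 1) * wp τ (z + halfp τ k / 2))
    + (3 / 4) * (wp τ (z + p) + wp τ (z - p))
    + A * (zeta τ (z + p) - zeta τ (z - p)) + B

end

/-! Off the classes of its possible poles `±p` and `-ω_k/2`, `U` is holomorphic in `z`. By the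
Legendre relation `τ η₁ - η₂ = 2πi`, `Ω` picks up the constants `0` and `-1 = -dτ/dτ` under
`z ↦ z + 1` and `z ↦ z + τ`, which is exactly what differentiating `I(z + τ; τ) = I(z; τ)` in `τ`
calls for; so `U` is elliptic. At `-ω_k/2` the field `Ω` is odd up to a constant, which makes `U`
regular there. At `z = p` the formula for `B` leaves a polar part of order three, with coefficients
`3 δp`, `-2 A δp` and `-2 δA`, where `δp` and `δA` are the deviations of `p'` and `A'` from the
Hamiltonian values; hence `U = 0` forces `δp = δA = 0`. Conversely, if both vanish then `U` is
regular at `p`, and at `-p` because it is even in `z`; by Liouville's theorem it is constant, and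
the constant is `0` because the value of `U` at `p` is a combination of `δp` and `δA` too. -/

universe u

noncomputable section

section HolomorphicSeries

variable {ι : Type*} {E F : Type u} [NormedAddCommGroup E] [NormedSpace ℂ E]
  [NormedAddCommGroup F] [NormedSpace ℂ F]

theorem norm_fderiv_le_of_norm_le_on_ball {f : E → F} {c x : E} {r R M : ℝ} (hr : r < R)
    (hf : DifferentiableOn ℂ f (Metric.ball c R)) (hb : ∀ y ∈ Metric.ball c R, ‖f y‖ ≤ M)
    (hx : x ∈ Metric.ball c r) : ‖fderiv ℂ f x‖ ≤ 2 * M / (R - r) := by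
  have hsub : Metric.ball x (R - r) ⊆ Metric.ball c R := by
    apply Metric.ball_subset_ball'
    rw [Metric.mem_ball] at hx
    linarith
  refine norm_fderiv_le_div_of_mapsTo_ball (hf.mono hsub) (fun y hy => ?_) (by linarith)
  rw [Metric.mem_closedBall, dist_eq_norm]
  linarith [hb y (hsub hy), hb x (Metric.ball_subset_ball hr.le hx), norm_sub_le (f y) (f x)]

variable [CompleteSpace F] {f : ι → E → F} {u : ι → ℝ} {c : E} {r R : ℝ}

theorem hasFDerivAt_tsum_of_norm_le_on_ball (hu : Summable u)
    (hf : ∀ i, DifferentiableOn ℂ (f i) (Metric.ball c R))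
    (hb : ∀ i, ∀ x ∈ Metric.ball c R, ‖f i x‖ ≤ u i) (hr : r < R) {x : E}
    (hx : x ∈ Metric.ball c r) :
    HasFDerivAt (fun y => ∑' i, f i y) (∑' i, fderiv ℂ (f i) x) x := by
  have hmem : Metric.ball c r ⊆ Metric.ball c R := Metric.ball_subset_ball hr.le
  refine hasFDerivAt_tsum_of_isPreconnected ((hu.mul_left 2).div_const (R - r))
    Metric.isOpen_ball (convex_ball c r).isPreconnected (fun i y hy => ?_)
    (fun i y hy => norm_fderiv_le_of_norm_le_on_ball hr (hf i) (hb i) hy) hx ?_ hx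
  · exact ((hf i).differentiableAt (Metric.isOpen_ball.mem_nhds (hmem hy))).hasFDerivAt
  · exact Summable.of_norm_bounded hu fun i => hb i x (hmem hx)

theorem contDiffOn_tsum_of_norm_le_on_ball (hu : Summable u)
    (hf : ∀ i, AnalyticOnNhd ℂ (f i) (Metric.ball c R))
    (hb : ∀ i, ∀ x ∈ Metric.ball c R, ‖f i x‖ ≤ u i) (hr : r < R) (n : ℕ) :
    ContDiffOn ℂ n (fun y => ∑' i, f i y) (Metric.ball c r) := by
  induction n generalizing F u r R with
  | zero =>
    exact contDiffOn_zero.2 fun x hx => (hasFDerivAt_tsum_of_norm_le_on_ball hu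
      (fun i => (hf i).differentiableOn) hb hr hx).continuousAt.continuousWithinAt
  | succ n ih =>
    obtain ⟨s, hrs, hsR⟩ := exists_between hr
    have hderiv : ∀ x ∈ Metric.ball c r,
        HasFDerivAt (fun y => ∑' i, f i y) (∑' i, fderiv ℂ (f i) x) x := fun x hx =>
      hasFDerivAt_tsum_of_norm_le_on_ball hu (fun i => (hf i).differentiableOn) hb hr hx
    rw [Nat.cast_add, Nat.cast_one, contDiffOn_succ_iff_fderiv_of_isOpen Metric.isOpen_ball]
    refine ⟨fun x hx => (hderiv x hx).differentiableAt.differentiableWithinAt, by simp, ?_⟩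
    have hcont : ContDiffOn ℂ n (fun y => ∑' i, fderiv ℂ (f i) y) (Metric.ball c r) :=
      ih ((hu.mul_left 2).div_const (R - s))
        (fun i => ((hf i).mono (Metric.ball_subset_ball hsR.le)).fderiv)
        (fun i x hx => norm_fderiv_le_of_norm_le_on_ball hsR (hf i).differentiableOn (hb i) hx) hrs
    exact hcont.congr fun x hx => (hderiv x hx).fderiv

theorem exists_summable_bound_on_ball {T : Set ι} (hT : T.Finite) (hu : Summable u)
    (hf : ∀ i, AnalyticAt ℂ (f i) c) (hR : 0 < R)
    (han : ∀ i ∉ T, AnalyticOnNhd ℂ (f i) (Metric.ball c R))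
    (hb : ∀ i ∉ T, ∀ x ∈ Metric.ball c R, ‖f i x‖ ≤ u i) :
    ∃ S > 0, ∃ v : ι → ℝ, Summable v ∧ ∀ i, AnalyticOnNhd ℂ (f i) (Metric.ball c S) ∧
      ∀ x ∈ Metric.ball c S, ‖f i x‖ ≤ v i := by
  classical
  have hnear : ∀ᶠ x in 𝓝 c, ∀ i ∈ T, AnalyticAt ℂ (f i) x ∧ ‖f i x‖ < ‖f i c‖ + 1 :=
    (eventually_all_finite hT).2 fun i _ => (hf i).eventually_analyticAt.and
      ((hf i).continuousAt.norm.eventually_lt_const (lt_add_one _))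
  obtain ⟨ε, hε, hball⟩ := Metric.eventually_nhds_iff_ball.1 hnear
  refine ⟨min ε R, lt_min hε hR, fun i => if i ∈ T then ‖f i c‖ + 1 else u i, ?_, fun i => ?_⟩
  · refine (summable_congr_cofinite ?_).1 hu
    filter_upwards [hT.compl_mem_cofinite] with i hi
    exact (if_neg hi).symm
  · by_cases hi : i ∈ T
    · have hmem : ∀ x ∈ Metric.ball c (min ε R), x ∈ Metric.ball c ε := fun x hx =>
        Metric.ball_subset_ball (min_le_left _ _) hx
      simp only [hi, if_true]
      exact ⟨fun x hx => (hball x (hmem x hx) i hi).1, fun x hx => (hball x (hmem x hx) i hi).2.le⟩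
    · have hsub : Metric.ball c (min ε R) ⊆ Metric.ball c R :=
        Metric.ball_subset_ball (min_le_right _ _)
      simp only [hi, if_false]
      exact ⟨(han i hi).mono hsub, fun x hx => hb i hi x (hsub hx)⟩

end HolomorphicSeries

section LatticeIndex

/-- The indices `(m, n) ≠ (0, 0)` of the nonzero points `m + nτ` of the lattice. -/
abbrev LatticeIndex : Type := {w : ℤ × ℤ // w ≠ 0}

/-- The lattice point `m + nτ` with index `(m, n)`. -/
def latticePoint (τ : ℂ) (w : LatticeIndex) : ℂ := (w.1.1 : ℂ) + (w.1.2 : ℂ) * τ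

theorem norm_intPair_eq_norm_vec (w : ℤ × ℤ) : ‖w‖ = ‖(![w.2, w.1] : Fin 2 → ℤ)‖ := by
  rw [EisensteinSeries.norm_symm, EisensteinSeries.norm_eq_max_natAbs, Prod.norm_def]
  simp [Int.norm_eq_abs]

theorem summable_norm_latticeIndex_rpow :
    Summable fun w : LatticeIndex => ‖w.1‖ ^ (-3 : ℝ) := by
  have hinj : Function.Injective (fun w : LatticeIndex => (![w.1.2, w.1.1] : Fin 2 → ℤ)) :=
    fun v w h => Subtype.ext (Prod.ext (congrFun h 1) (congrFun h 0))
  simpa only [norm_intPair_eq_norm_vec, Function.comp_def] using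
    (EisensteinSeries.summable_one_div_norm_rpow (k := 3) (by norm_num)).comp_injective hinj

theorem finite_norm_latticeIndex_le (N : ℝ) : {w : LatticeIndex | ‖w.1‖ ≤ N}.Finite := by
  have h : (Metric.closedBall (0 : ℤ × ℤ) N).Finite :=
    isCompact_iff_finite.1 (isCompact_closedBall _ _)
  refine (h.preimage Subtype.val_injective.injOn).subset fun w hw => ?_
  simpa using hw

theorem norm_latticeIndex_pos (w : LatticeIndex) : 0 < ‖w.1‖ := norm_pos_iff.2 w.2

theorem exists_mem_verticalStrip_of_dist_lt {τ t : ℂ} (hτ : 0 < τ.im)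
    (ht : dist t τ < min 1 (τ.im / 2)) : ∃ s ∈ UpperHalfPlane.verticalStrip (|τ.re| + 1) (τ.im / 2),
      (s : ℂ) = t := by
  rw [dist_eq_norm, lt_min_iff] at ht
  have hre : |t.re - τ.re| < 1 := (abs_re_le_norm (t - τ)).trans_lt ht.1
  have him : |t.im - τ.im| < τ.im / 2 := (abs_im_le_norm (t - τ)).trans_lt ht.2
  have him' : τ.im / 2 ≤ t.im := by linarith [(abs_lt.1 him).1]
  refine ⟨⟨t, by linarith⟩, UpperHalfPlane.mem_verticalStrip_iff _ _ _ |>.2 ⟨?_, him'⟩, rfl⟩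
  calc |t.re| = |t.re - τ.re + τ.re| := by rw [sub_add_cancel]
    _ ≤ |t.re - τ.re| + |τ.re| := abs_add_le _ _
    _ ≤ |τ.re| + 1 := by linarith

theorem exists_mul_norm_le_norm_latticePoint {τ : ℂ} (hτ : 0 < τ.im) :
    ∃ δ > 0, ∃ ρ > 0, ∀ t ∈ Metric.ball τ δ, 0 < t.im ∧
      ∀ w : LatticeIndex, ρ * ‖w.1‖ ≤ ‖latticePoint t w‖ := by
  have hB : 0 < τ.im / 2 := half_pos hτ
  refine ⟨min 1 (τ.im / 2), lt_min one_pos hB, EisensteinSeries.r ⟨⟨|τ.re| + 1, τ.im / 2⟩, hB⟩,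
    EisensteinSeries.r_pos _, fun t ht => ?_⟩
  obtain ⟨s, hs, rfl⟩ := exists_mem_verticalStrip_of_dist_lt hτ ht
  refine ⟨s.im_pos, fun w => ?_⟩
  have hw : (![w.1.2, w.1.1] : Fin 2 → ℤ) ≠ 0 := by
    rw [← norm_pos_iff, ← norm_intPair_eq_norm_vec]
    exact norm_latticeIndex_pos w
  calc EisensteinSeries.r ⟨⟨|τ.re| + 1, τ.im / 2⟩, hB⟩ * ‖w.1‖
      ≤ EisensteinSeries.r s * ‖(![w.1.2, w.1.1] : Fin 2 → ℤ)‖ := by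
        rw [norm_intPair_eq_norm_vec]
        gcongr
        exact EisensteinSeries.r_lower_bound_on_verticalStrip _ hB hs
    _ ≤ _ := EisensteinSeries.r_mul_max_le s hw
    _ = ‖latticePoint s w‖ := by
        simp only [latticePoint, Matrix.cons_val_zero, Matrix.cons_val_one, add_comm]

theorem latticePoint_ne_zero {τ : ℂ} (hτ : 0 < τ.im) (w : LatticeIndex) : latticePoint τ w ≠ 0 := by
  obtain ⟨δ, hδ, ρ, hρ, h⟩ := exists_mul_norm_le_norm_latticePoint hτ
  have hle : ρ * ‖w.1‖ ≤ ‖latticePoint τ w‖ := (h τ (Metric.mem_ball_self hδ)).2 w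
  exact norm_pos_iff.1 ((mul_pos hρ (norm_latticeIndex_pos w)).trans_le hle)

/-- The pairs `(τ, z)` with `τ ∈ ℍ` at which every term of the series for `ζ(z|τ) - 1/z` is
holomorphic: `z` is not a nonzero lattice point, but `z = 0` is allowed. -/
def OffPeriods (x : ℂ × ℂ) : Prop := 0 < x.1.im ∧ ∀ w : LatticeIndex, x.2 ≠ latticePoint x.1 w

theorem offPeriods_zero {τ : ℂ} (hτ : 0 < τ.im) : OffPeriods (τ, 0) :=
  ⟨hτ, fun w => (latticePoint_ne_zero hτ w).symm⟩

theorem offPeriods_of_not_inLattice {τ z : ℂ} (hτ : 0 < τ.im) (hz : ¬ InLattice τ z) :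
    OffPeriods (τ, z) :=
  ⟨hτ, fun w h => hz ⟨w.1.1, w.1.2, h⟩⟩

theorem OffPeriods.not_inLattice {τ z : ℂ} (h : OffPeriods (τ, z)) (hz : z ≠ 0) :
    ¬ InLattice τ z := by
  rintro ⟨m, n, hmn⟩
  by_cases hw : ((m, n) : ℤ × ℤ) = 0
  · rw [Prod.mk_eq_zero] at hw
    exact hz (by simp [hmn, hw.1, hw.2])
  · exact h.2 ⟨(m, n), hw⟩ hmn

theorem exists_finite_forall_notMem_le_norm_latticePoint {c : ℂ × ℂ} (hc : 0 < c.1.im) :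
    ∃ R > 0, ∃ T : Set LatticeIndex, T.Finite ∧ ∃ ρ > 0, ∃ M > 0, ∀ x ∈ Metric.ball c R,
      0 < x.1.im ∧ ‖x.2‖ ≤ M ∧ ∀ w ∉ T, ρ * ‖w.1‖ ≤ ‖latticePoint x.1 w‖ ∧
        2 * M ≤ ‖latticePoint x.1 w‖ := by
  obtain ⟨δ, hδ, ρ, hρ, h⟩ := exists_mul_norm_le_norm_latticePoint hc
  refine ⟨min δ 1, lt_min hδ one_pos, _, finite_norm_latticeIndex_le (2 * (‖c.2‖ + 1) / ρ), ρ, hρ,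
    ‖c.2‖ + 1, by positivity, fun x hx => ?_⟩
  rw [Metric.mem_ball, lt_min_iff] at hx
  have hx1 : x.1 ∈ Metric.ball c.1 δ := (le_max_left _ _).trans_lt hx.1
  have hx2 : ‖x.2 - c.2‖ < 1 := by
    rw [← dist_eq_norm]
    exact (le_max_right _ _).trans_lt hx.2
  refine ⟨(h x.1 hx1).1, by linarith [norm_le_norm_add_norm_sub' x.2 c.2], fun w hw => ?_⟩
  have hle : ρ * ‖w.1‖ ≤ ‖latticePoint x.1 w‖ := (h x.1 hx1).2 w
  rw [Set.mem_ofPred_eq, not_le, div_lt_iff₀' hρ] at hw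
  exact ⟨hle, hw.le.trans hle⟩

theorem ne_of_two_mul_le_norm {z l : ℂ} {M : ℝ} (hM : 0 < M) (hz : ‖z‖ ≤ M) (hl : 2 * M ≤ ‖l‖) :
    z ≠ l := by
  rintro rfl
  linarith

theorem eventually_offPeriods {c : ℂ × ℂ} (hc : OffPeriods c) : ∀ᶠ x in 𝓝 c, OffPeriods x := by
  obtain ⟨R, hR, T, hT, ρ, -, M, hM, h⟩ := exists_finite_forall_notMem_le_norm_latticePoint hc.1
  have hnear : ∀ᶠ x in 𝓝 c, ∀ w ∈ T, x.2 ≠ latticePoint x.1 w := by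
    refine (eventually_all_finite hT).2 fun w _ => ?_
    have hcont : ContinuousAt (fun x : ℂ × ℂ => latticePoint x.1 w) c := by
      unfold latticePoint
      fun_prop
    filter_upwards [(continuousAt_snd.sub hcont).eventually_ne (sub_ne_zero.2 (hc.2 w))] with x hx
    exact sub_ne_zero.1 hx
  filter_upwards [hnear, Metric.ball_mem_nhds c hR] with x hx hxb
  refine ⟨(h x hxb).1, fun w => ?_⟩
  by_cases hwT : w ∈ T
  · exact hx w hwT
  · exact ne_of_two_mul_le_norm hM (h x hxb).2.1 ((h x hxb).2.2 w hwT).2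

end LatticeIndex

section RegularPartOfZeta

/-- The term of the series for `ζ(z|τ) - 1/z` at the index `w`, as a function of `(τ, z)`. -/
def zetaTerm (w : LatticeIndex) (x : ℂ × ℂ) : ℂ :=
  (x.2 - latticePoint x.1 w)⁻¹ + (latticePoint x.1 w)⁻¹ + x.2 * (latticePoint x.1 w)⁻¹ ^ 2

/-- The regular part `ζ(z|τ) - 1/z` of the Weierstrass zeta function, as a function of `(τ, z)`. -/
def zetaReg (x : ℂ × ℂ) : ℂ := ∑' w : LatticeIndex, zetaTerm w x

theorem zetaReg_zero (τ : ℂ) : zetaReg (τ, 0) = 0 := by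
  simp [zetaReg, zetaTerm]

theorem analyticAt_zetaTerm {x : ℂ × ℂ} {w : LatticeIndex} (h0 : latticePoint x.1 w ≠ 0)
    (hx : x.2 ≠ latticePoint x.1 w) : AnalyticAt ℂ (zetaTerm w) x := by
  have hl : AnalyticAt ℂ (fun x : ℂ × ℂ => latticePoint x.1 w) x :=
    analyticAt_const.add (analyticAt_const.mul analyticAt_fst)
  have hs : AnalyticAt ℂ (fun x : ℂ × ℂ => x.2) x := analyticAt_snd
  exact (((hs.sub hl).inv (sub_ne_zero.2 hx)).add (hl.inv h0)).add (hs.mul ((hl.inv h0).pow 2))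

theorem norm_zetaTerm_le {x : ℂ × ℂ} {w : LatticeIndex} {ρ M : ℝ} (hρ : 0 < ρ) (hM : 0 < M)
    (hx : ‖x.2‖ ≤ M) (hindex : ρ * ‖w.1‖ ≤ ‖latticePoint x.1 w‖)
    (hfar : 2 * M ≤ ‖latticePoint x.1 w‖) :
    ‖zetaTerm w x‖ ≤ 2 * M ^ 2 / ρ ^ 3 * ‖w.1‖ ^ (-3 : ℝ) := by
  have hwpos : 0 < ‖w.1‖ := norm_latticeIndex_pos w
  rw [zetaTerm, show (-3 : ℝ) = ((-3 : ℤ) : ℝ) by norm_num, Real.rpow_intCast, zpow_neg]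
  generalize latticePoint x.1 w = l at hindex hfar ⊢
  have hl : 0 < ‖l‖ := by linarith
  have hdist : ‖l‖ / 2 ≤ ‖x.2 - l‖ := by linarith [norm_sub_norm_le l x.2, norm_sub_rev l x.2]
  have hl0 : l ≠ 0 := norm_pos_iff.1 hl
  have hd0 : x.2 - l ≠ 0 := norm_pos_iff.1 (by linarith)
  have hterm : (x.2 - l)⁻¹ + l⁻¹ + x.2 * l⁻¹ ^ 2 = x.2 ^ 2 / (l ^ 2 * (x.2 - l)) := by
    field_simp
    ring
  calc ‖(x.2 - l)⁻¹ + l⁻¹ + x.2 * l⁻¹ ^ 2‖ = ‖x.2‖ ^ 2 / (‖l‖ ^ 2 * ‖x.2 - l‖) := by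
        rw [hterm, norm_div, norm_mul, norm_pow, norm_pow]
    _ ≤ M ^ 2 / (‖l‖ ^ 2 * (‖l‖ / 2)) := by gcongr
    _ = 2 * M ^ 2 / ‖l‖ ^ 3 := by field_simp
    _ ≤ 2 * M ^ 2 / (ρ * ‖w.1‖) ^ 3 := by gcongr
    _ = 2 * M ^ 2 / ρ ^ 3 * (‖w.1‖ ^ (3 : ℤ))⁻¹ := by
        rw [mul_pow, ← div_div, div_eq_mul_inv _ (‖w.1‖ ^ 3)]
        norm_cast

theorem exists_summable_bound_zetaTerm {c : ℂ × ℂ} (hc : OffPeriods c) :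
    ∃ S > 0, ∃ v : LatticeIndex → ℝ, Summable v ∧ ∀ w,
      AnalyticOnNhd ℂ (zetaTerm w) (Metric.ball c S) ∧
      ∀ x ∈ Metric.ball c S, ‖zetaTerm w x‖ ≤ v w := by
  obtain ⟨R, hR, T, hT, ρ, hρ, M, hM, h⟩ := exists_finite_forall_notMem_le_norm_latticePoint hc.1
  refine exists_summable_bound_on_ball hT
    (summable_norm_latticeIndex_rpow.mul_left (2 * M ^ 2 / ρ ^ 3))
    (fun w => analyticAt_zetaTerm (latticePoint_ne_zero hc.1 w) (hc.2 w)) hR ?_ ?_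
  · intro w hw x hx
    obtain ⟨him, hxM, hfar⟩ := h x hx
    exact analyticAt_zetaTerm (latticePoint_ne_zero him w)
      (ne_of_two_mul_le_norm hM hxM (hfar w hw).2)
  · intro w hw x hx
    obtain ⟨-, hxM, hfar⟩ := h x hx
    exact norm_zetaTerm_le hρ hM hxM (hfar w hw).1 (hfar w hw).2

theorem contDiffAt_zetaReg {c : ℂ × ℂ} (hc : OffPeriods c) (n : ℕ) : ContDiffAt ℂ n zetaReg c := by
  obtain ⟨S, hS, v, hv, hbound⟩ := exists_summable_bound_zetaTerm hc
  exact (contDiffOn_tsum_of_norm_le_on_ball hv (fun w => (hbound w).1) (fun w => (hbound w).2)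
    (half_lt_self hS) n).contDiffAt (Metric.ball_mem_nhds c (half_pos hS))

theorem hasSum_fderiv_zetaTerm {c : ℂ × ℂ} (hc : OffPeriods c) :
    HasSum (fun w => fderiv ℂ (zetaTerm w) c) (fderiv ℂ zetaReg c) := by
  obtain ⟨S, hS, v, hv, hbound⟩ := exists_summable_bound_zetaTerm hc
  have hmem : c ∈ Metric.ball c (S / 2) := Metric.mem_ball_self (half_pos hS)
  have hderiv : HasFDerivAt zetaReg (∑' w, fderiv ℂ (zetaTerm w) c) c :=
    hasFDerivAt_tsum_of_norm_le_on_ball hv (fun w => (hbound w).1.differentiableOn)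
      (fun w => (hbound w).2) (half_lt_self hS) hmem
  rw [hderiv.fderiv]
  exact (Summable.of_norm_bounded ((hv.mul_left 2).div_const (S - S / 2)) fun w =>
    norm_fderiv_le_of_norm_le_on_ball (half_lt_self hS) (hbound w).1.differentiableOn
      (hbound w).2 hmem).hasSum

theorem hasDerivAt_mk_right {f : ℂ × ℂ → ℂ} {x : ℂ × ℂ} (hf : DifferentiableAt ℂ f x) :
    HasDerivAt (fun z => f (x.1, z)) (fderiv ℂ f x (0, 1)) x.2 :=
  hf.hasFDerivAt.comp_hasDerivAt x.2 ((hasDerivAt_const x.2 x.1).prodMk (hasDerivAt_id x.2))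

theorem fderiv_zetaTerm_apply {x : ℂ × ℂ} {w : LatticeIndex} (h0 : latticePoint x.1 w ≠ 0)
    (hx : x.2 ≠ latticePoint x.1 w) : fderiv ℂ (zetaTerm w) x (0, 1) =
      -((x.2 - latticePoint x.1 w)⁻¹ ^ 2 - (latticePoint x.1 w)⁻¹ ^ 2) := by
  have hcalc : HasDerivAt (fun z : ℂ => zetaTerm w (x.1, z))
      (-1 / (x.2 - latticePoint x.1 w) ^ 2 + 1 * (latticePoint x.1 w)⁻¹ ^ 2) x.2 :=
    ((((hasDerivAt_id' x.2).sub_const (latticePoint x.1 w)).fun_inv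
      (sub_ne_zero.2 hx)).add_const (latticePoint x.1 w)⁻¹).fun_add
      ((hasDerivAt_id' x.2).mul_const ((latticePoint x.1 w)⁻¹ ^ 2))
  rw [(hasDerivAt_mk_right (analyticAt_zetaTerm h0 hx).differentiableAt).unique hcalc]
  simp only [inv_pow, neg_div, one_div]
  ring

theorem fderiv_zetaReg_apply {c : ℂ × ℂ} (hc : OffPeriods c) :
    fderiv ℂ zetaReg c (0, 1) = -(wp c.1 c.2 - c.2⁻¹ ^ 2) := by
  have hsum := (ContinuousLinearMap.apply ℂ ℂ ((0 : ℂ), (1 : ℂ))).hasSum (hasSum_fderiv_zetaTerm hc)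
  simp only [ContinuousLinearMap.apply_apply,
    fun w => fderiv_zetaTerm_apply (latticePoint_ne_zero hc.1 w) (hc.2 w)] at hsum
  rw [wp, add_sub_cancel_left, ← tsum_neg]
  exact hsum.tsum_eq.symm

theorem hasDerivAt_zetaReg {τ z : ℂ} (h : OffPeriods (τ, z)) :
    HasDerivAt (fun y => zetaReg (τ, y)) (-(wp τ z - z⁻¹ ^ 2)) z :=
  (hasDerivAt_mk_right ((contDiffAt_zetaReg h 1).differentiableAt (by simp))).congr_deriv
    (fderiv_zetaReg_apply h)

end RegularPartOfZeta

end

noncomputable section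

section Lattice

theorem inLattice_zero (τ : ℂ) : InLattice τ 0 := ⟨0, 0, by simp⟩

theorem inLattice_one (τ : ℂ) : InLattice τ 1 := ⟨1, 0, by simp⟩

theorem inLattice_self (τ : ℂ) : InLattice τ τ := ⟨0, 1, by simp⟩

theorem InLattice.add {τ a b : ℂ} (ha : InLattice τ a) (hb : InLattice τ b) :
    InLattice τ (a + b) := by
  obtain ⟨m, n, rfl⟩ := ha
  obtain ⟨m', n', rfl⟩ := hb
  exact ⟨m + m', n + n', by push_cast; ring⟩

theorem InLattice.neg {τ a : ℂ} (ha : InLattice τ a) : InLattice τ (-a) := by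
  obtain ⟨m, n, rfl⟩ := ha
  exact ⟨-m, -n, by push_cast; ring⟩

theorem inLattice_neg_iff {τ a : ℂ} : InLattice τ (-a) ↔ InLattice τ a :=
  ⟨fun h => neg_neg a ▸ h.neg, InLattice.neg⟩

theorem inLattice_add_iff {τ a l : ℂ} (hl : InLattice τ l) :
    InLattice τ (a + l) ↔ InLattice τ a :=
  ⟨fun h => add_neg_cancel_right a l ▸ h.add hl.neg, fun h => h.add hl⟩

theorem ne_zero_of_not_inLattice {τ z : ℂ} (hz : ¬ InLattice τ z) : z ≠ 0 := by
  rintro rfl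
  exact hz (inLattice_zero τ)

/-- The period pair `(1, τ)`, through which Mathlib's results on `℘` are transported. -/
def standardPair (τ : ℂ) (hτ : 0 < τ.im) : PeriodPair where
  ω₁ := 1
  ω₂ := τ
  indep := by
    rw [LinearIndependent.pair_iff]
    intro s t h
    have him : t * τ.im = 0 := by simpa using congrArg Complex.im h
    have ht : t = 0 := (mul_eq_zero.1 him).resolve_right hτ.ne'
    exact ⟨by simpa [ht] using congrArg Complex.re h, ht⟩

theorem mem_standardPair_lattice {τ z : ℂ} (hτ : 0 < τ.im) :
    z ∈ (standardPair τ hτ).lattice ↔ InLattice τ z := by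
  simp only [PeriodPair.mem_lattice, InLattice, standardPair, mul_one, eq_comm]

theorem isOpen_not_inLattice {τ : ℂ} (hτ : 0 < τ.im) : IsOpen {z | ¬ InLattice τ z} := by
  simp_rw [← mem_standardPair_lattice hτ]
  exact (standardPair τ hτ).isClosed_lattice.isOpen_compl

theorem eventually_not_inLattice {τ : ℂ} (hτ : 0 < τ.im) (z : ℂ) :
    ∀ᶠ y in 𝓝[≠] z, ¬ InLattice τ y := by
  have h := (standardPair τ hτ).compl_lattice_sdiff_singleton_mem_nhds z
  filter_upwards [nhdsWithin_le_nhds h, self_mem_nhdsWithin] with y hy hne hin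
  exact hy ⟨(mem_standardPair_lattice hτ).2 hin, hne⟩

theorem isPreconnected_not_inLattice (τ : ℂ) : IsPreconnected {z | ¬ InLattice τ z} := by
  have hcountable : {z | InLattice τ z}.Countable := by
    refine (Set.countable_range fun w : ℤ × ℤ => (w.1 : ℂ) + w.2 * τ).mono ?_
    rintro z ⟨m, n, h⟩
    exact ⟨(m, n), h.symm⟩
  exact (hcountable.isConnected_compl_of_one_lt_rank
    (by simp [Complex.rank_real_complex])).isPreconnected

theorem exists_forall_eq_of_hasDerivAt_zero {τ : ℂ} (hτ : 0 < τ.im) {f : ℂ → ℂ}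
    (hf : ∀ z, ¬ InLattice τ z → HasDerivAt f 0 z) : ∃ a, ∀ z, ¬ InLattice τ z → f z = a :=
  (isOpen_not_inLattice hτ).exists_is_const_of_deriv_eq_zero (isPreconnected_not_inLattice τ)
    (fun z hz => (hf z hz).differentiableAt.differentiableWithinAt) (fun z hz => (hf z hz).deriv)

theorem apply_add_zsmul_of_apply_add {M N : Type*} [AddCommGroup M] [AddCommGroup N]
    {S : Set M} {f : M → N} {l : M} {k : N} (hS : ∀ z, z + l ∈ S ↔ z ∈ S)
    (hf : ∀ z ∈ S, f (z + l) = f z + k) (n : ℤ) :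
    ∀ z ∈ S, z + n • l ∈ S ∧ f (z + n • l) = f z + n • k := by
  induction n with
  | zero => simp
  | succ n ih =>
    intro z hz
    obtain ⟨hmem, hval⟩ := ih z hz
    rw [add_zsmul, one_zsmul, ← add_assoc, add_zsmul, one_zsmul, ← add_assoc, ← hval]
    exact ⟨(hS _).2 hmem, hf _ hmem⟩
  | pred n ih =>
    intro z hz
    obtain ⟨hmem, hval⟩ := ih z hz
    have hshift : z + (-(n : ℤ) - 1) • l + l = z + (-(n : ℤ)) • l := by
      rw [sub_zsmul, one_zsmul]
      abel
    have hmem' : z + (-(n : ℤ) - 1) • l ∈ S := (hS _).1 (hshift ▸ hmem)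
    refine ⟨hmem', ?_⟩
    rw [eq_sub_of_add_eq (hf _ hmem').symm, hshift, hval, sub_zsmul, one_zsmul]
    abel

end Lattice

section WeierstrassP

theorem wp_eq_weierstrassP {τ : ℂ} (hτ : 0 < τ.im) (z : ℂ) :
    wp τ z = (standardPair τ hτ).weierstrassP z := by
  set L := standardPair τ hτ
  have hpair : ∀ w : ℤ × ℤ, ((L.latticeEquivProd.symm w : L.lattice) : ℂ) = w.1 + w.2 * τ := by
    intro w
    rw [PeriodPair.latticeEquiv_symm_apply]
    simp [L, standardPair]
  have hsum := (L.latticeEquivProd.symm.toEquiv.hasSum_iff).2 (L.hasSum_weierstrassP z)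
  rw [← hsum.tsum_eq, hsum.summable.tsum_eq_add_tsum_ite (0 : ℤ × ℤ), wp]
  congr 1
  · simp
  · rw [← tsum_subtype_eq_of_support_subset (s := {w : ℤ × ℤ | w ≠ 0}) fun w hw h0 =>
      hw (by simp [h0])]
    refine tsum_congr fun w => ?_
    have hw : w.1 ≠ 0 := w.2
    simp only [hw, if_false, Function.comp_apply, LinearEquiv.coe_toEquiv, hpair, one_div, inv_pow]

theorem wp_zero (τ : ℂ) : wp τ 0 = 0 := by
  simp only [wp, zero_sub, inv_neg, neg_sq, sub_self, tsum_zero, inv_zero]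
  norm_num

theorem wp_neg {τ : ℂ} (hτ : 0 < τ.im) (z : ℂ) : wp τ (-z) = wp τ z := by
  simp only [wp_eq_weierstrassP hτ, PeriodPair.weierstrassP_neg]

theorem wp_add_of_inLattice {τ l : ℂ} (hτ : 0 < τ.im) (hl : InLattice τ l) (z : ℂ) :
    wp τ (z + l) = wp τ z := by
  simp only [wp_eq_weierstrassP hτ]
  exact (standardPair τ hτ).weierstrassP_add_coe z ⟨l, (mem_standardPair_lattice hτ).2 hl⟩

theorem contDiffAt_wp_sub_inv_sq {x : ℂ × ℂ} (hx : OffPeriods x) (n : ℕ) :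
    ContDiffAt ℂ n (fun y : ℂ × ℂ => wp y.1 y.2 - y.2⁻¹ ^ 2) x := by
  have h := ((contDiffAt_zetaReg hx (n + 1)).fderiv_right (m := n) (by norm_cast)).clm_apply
    (contDiffAt_const (c := ((0 : ℂ), (1 : ℂ))))
  refine h.neg.congr_of_eventuallyEq ((eventually_offPeriods hx).mono fun y hy => ?_)
  simp only [fderiv_zetaReg_apply hy, neg_neg]

theorem contDiffAt_wp {τ z : ℂ} (hτ : 0 < τ.im) (hz : ¬ InLattice τ z) (n : ℕ) :
    ContDiffAt ℂ n (fun y : ℂ × ℂ => wp y.1 y.2) (τ, z) := by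
  have h := (contDiffAt_wp_sub_inv_sq (offPeriods_of_not_inLattice hτ hz) n).add
    ((contDiffAt_snd.inv (ne_zero_of_not_inLattice hz)).pow 2)
  simpa using! h

end WeierstrassP

section WeierstrassZeta

variable {zeta : ℂ → ℂ → ℂ}

theorem IsWeierstrassZeta.apply_zero (hzeta : IsWeierstrassZeta zeta) {τ : ℂ} (hτ : 0 < τ.im) :
    zeta τ 0 = 0 := by
  have h := (hzeta τ hτ).1 0
  rwa [neg_zero, self_eq_neg] at h

theorem IsWeierstrassZeta.sub_inv_eq_zetaReg (hzeta : IsWeierstrassZeta zeta) {x : ℂ × ℂ}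
    (hx : OffPeriods x) : zeta x.1 x.2 - x.2⁻¹ = zetaReg x := by
  obtain ⟨τ, z⟩ := x
  have hτ : 0 < τ.im := hx.1
  obtain ⟨-, hderiv, hlim⟩ := hzeta τ hτ
  by_cases hz0 : z = 0
  · subst hz0
    simp [hzeta.apply_zero hτ, zetaReg_zero]
  obtain ⟨a, ha⟩ := exists_forall_eq_of_hasDerivAt_zero hτ
    (f := fun y => zeta τ y - y⁻¹ - zetaReg (τ, y)) fun y hy =>
      (((hderiv y hy).fun_sub (hasDerivAt_inv (ne_zero_of_not_inLattice hy))).fun_sub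
        (hasDerivAt_zetaReg (offPeriods_of_not_inLattice hτ hy))).congr_deriv (by ring)
  have hreg : Tendsto (fun y => zetaReg (τ, y)) (𝓝[≠] 0) (𝓝 0) := by
    have hcont := (hasDerivAt_zetaReg (offPeriods_zero hτ)).continuousAt.tendsto
    rw [zetaReg_zero] at hcont
    exact hcont.mono_left nhdsWithin_le_nhds
  have ha0 : a = 0 := by
    refine tendsto_nhds_unique (tendsto_const_nhds.congr' ?_) (sub_zero (0 : ℂ) ▸ hlim.sub hreg)
    filter_upwards [eventually_not_inLattice hτ 0] with y hy
    exact (ha y hy).symm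
  exact sub_eq_zero.1 ((ha z (hx.not_inLattice hz0)).trans ha0)

theorem IsWeierstrassZeta.contDiffAt_sub_inv (hzeta : IsWeierstrassZeta zeta) {x : ℂ × ℂ}
    (hx : OffPeriods x) (n : ℕ) :
    ContDiffAt ℂ n (fun y : ℂ × ℂ => zeta y.1 y.2 - y.2⁻¹) x :=
  (contDiffAt_zetaReg hx n).congr_of_eventuallyEq <|
    (eventually_offPeriods hx).mono fun _ hy => hzeta.sub_inv_eq_zetaReg hy

theorem IsWeierstrassZeta.contDiffAt (hzeta : IsWeierstrassZeta zeta) {τ z : ℂ}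
    (hτ : 0 < τ.im) (hz : ¬ InLattice τ z) (n : ℕ) :
    ContDiffAt ℂ n (fun y : ℂ × ℂ => zeta y.1 y.2) (τ, z) := by
  have h := (hzeta.contDiffAt_sub_inv (offPeriods_of_not_inLattice hτ hz) n).add
    (contDiffAt_snd.inv (ne_zero_of_not_inLattice hz))
  simpa using! h

theorem IsWeierstrassZeta.exists_quasiPeriod (hzeta : IsWeierstrassZeta zeta) {τ l : ℂ}
    (hτ : 0 < τ.im) (hl : InLattice τ l) :
    ∃ η : ℂ, ∀ z, ¬ InLattice τ z → zeta τ (z + l) - zeta τ z = η := by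
  refine exists_forall_eq_of_hasDerivAt_zero hτ fun z hz => ?_
  have hshift := (hzeta τ hτ).2.1 (z + l) (mt (inLattice_add_iff hl).1 hz)
  refine ((hshift.comp_add_const z l).fun_sub ((hzeta τ hτ).2.1 z hz)).congr_deriv ?_
  rw [wp_add_of_inLattice hτ hl, sub_self]

end WeierstrassZeta

section RectangleResidue

/-- The counterclockwise integral of `f` along the boundary of the rectangle
`[-a, a] × [-b, b]`. -/
def symmRectIntegral (f : ℂ → ℂ) (a b : ℝ) : ℂ :=
  (∫ x : ℝ in -a..a, f (x + (-b : ℝ) * I)) - (∫ x : ℝ in -a..a, f (x + b * I)) +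
    I * (∫ y : ℝ in -b..b, f (a + y * I)) - I * ∫ y : ℝ in -b..b, f ((-a : ℝ) + y * I)

theorem integral_inv_add_mul_I {b : ℝ} (hb : b ≠ 0) (c d : ℝ) :
    ∫ x : ℝ in c..d, ((x : ℂ) + b * I)⁻¹ = log (d + b * I) - log (c + b * I) := by
  have hne : ∀ x : ℝ, (x : ℂ) + b * I ∈ slitPlane := fun x => Or.inr (by simpa using hb)
  refine intervalIntegral.integral_eq_sub_of_hasDerivAt
    (f := fun x : ℝ => log ((x : ℂ) + b * I)) (fun x _ => ?_) ?_
  · have h := ((ofRealCLM.hasDerivAt (x := x)).add_const ((b : ℂ) * I)).clog_real (hne x)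
    simpa using! h
  · exact ContinuousOn.intervalIntegrable
      (ContinuousOn.inv₀ (by fun_prop) fun x _ => slitPlane_ne_zero (hne x))

theorem I_mul_integral_inv_add_mul_I {a : ℝ} (ha : 0 < a) (c d : ℝ) :
    I * ∫ y : ℝ in c..d, ((a : ℂ) + y * I)⁻¹ = log (a + d * I) - log (a + c * I) := by
  have hne : ∀ y : ℝ, (a : ℂ) + y * I ∈ slitPlane := fun y => Or.inl (by simpa using ha)
  rw [← intervalIntegral.integral_const_mul]
  refine intervalIntegral.integral_eq_sub_of_hasDerivAt
    (f := fun y : ℝ => log ((a : ℂ) + y * I)) (fun y _ => ?_) ?_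
  · have h := (((ofRealCLM.hasDerivAt (x := y)).mul_const I).const_add (a : ℂ)).clog_real (hne y)
    simpa [div_eq_mul_inv] using! h
  · exact ContinuousOn.intervalIntegrable (continuousOn_const.mul
      (ContinuousOn.inv₀ (by fun_prop) fun y _ => slitPlane_ne_zero (hne y)))

theorem log_neg_of_im_pos {z : ℂ} (hz : 0 < z.im) : log (-z) = log z - Real.pi * I := by
  rw [log, log, norm_neg, arg_neg_eq_arg_sub_pi_of_im_pos hz]
  push_cast
  ring

theorem symmRectIntegral_inv {a b : ℝ} (ha : 0 < a) (hb : 0 < b) :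
    symmRectIntegral (fun z => z⁻¹) a b = 2 * Real.pi * I := by
  have hleft : (∫ y : ℝ in -b..b, (((-a : ℝ) : ℂ) + y * I)⁻¹) =
      -∫ y : ℝ in -b..b, ((a : ℂ) + y * I)⁻¹ := by
    rw [← neg_neg b, ← intervalIntegral.integral_comp_neg, neg_neg,
      ← intervalIntegral.integral_neg]
    refine intervalIntegral.integral_congr fun y _ => ?_
    simp only [← inv_neg]
    congr 1
    push_cast
    ring
  have hlog₁ : log ((-a : ℝ) + (-b : ℝ) * I) = log (a + b * I) - Real.pi * I := by
    rw [← log_neg_of_im_pos (by simpa using hb)]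
    congr 1
    push_cast
    ring
  have hlog₂ : log (a + (-b : ℝ) * I) = log ((-a : ℝ) + b * I) - Real.pi * I := by
    rw [← log_neg_of_im_pos (by simpa using hb)]
    congr 1
    push_cast
    ring
  have hright := I_mul_integral_inv_add_mul_I ha (-b) b
  rw [symmRectIntegral, hleft, integral_inv_add_mul_I hb.ne',
    integral_inv_add_mul_I (neg_ne_zero.2 hb.ne')]
  linear_combination 2 * hright - hlog₁ - hlog₂

theorem integral_comp_eq_add_integral_inv {f g : ℂ → ℂ} {K : Set ℂ} (hg : ContinuousOn g K)
    (hfg : ∀ z ∈ K, z ≠ 0 → f z = g z + z⁻¹) {γ : ℝ → ℂ} (hγ : Continuous γ) {c d : ℝ}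
    (hK : ∀ x ∈ Set.uIcc c d, γ x ∈ K) (h0 : ∀ x, γ x ≠ 0) :
    ∫ x in c..d, f (γ x) = (∫ x in c..d, g (γ x)) + ∫ x in c..d, (γ x)⁻¹ := by
  rw [← intervalIntegral.integral_add]
  · exact intervalIntegral.integral_congr fun x hx => hfg _ (hK x hx) (h0 x)
  · exact (hg.comp hγ.continuousOn hK).intervalIntegrable
  · exact (hγ.inv₀ h0).intervalIntegrable _ _

theorem symmRectIntegral_of_simple_pole {f g : ℂ → ℂ} {a b : ℝ} (ha : 0 < a) (hb : 0 < b)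
    (hg : DifferentiableOn ℂ g (Set.uIcc (-a) a ×ℂ Set.uIcc (-b) b))
    (hfg : ∀ z ∈ Set.uIcc (-a) a ×ℂ Set.uIcc (-b) b, z ≠ 0 → f z = g z + z⁻¹) :
    symmRectIntegral f a b = 2 * Real.pi * I := by
  have hhor : ∀ s ∈ Set.uIcc (-b) b, s ≠ 0 → ∫ x : ℝ in -a..a, f (x + s * I) =
      (∫ x : ℝ in -a..a, g (x + s * I)) + ∫ x : ℝ in -a..a, ((x : ℂ) + s * I)⁻¹ :=
    fun s hs hs0 => integral_comp_eq_add_integral_inv hg.continuousOn hfg (by fun_prop)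
      (fun x hx => by simpa [mem_reProdIm] using ⟨hx, hs⟩)
      (fun x h => hs0 (by simpa using congrArg Complex.im h))
  have hver : ∀ s ∈ Set.uIcc (-a) a, s ≠ 0 → ∫ y : ℝ in -b..b, f (s + y * I) =
      (∫ y : ℝ in -b..b, g (s + y * I)) + ∫ y : ℝ in -b..b, ((s : ℂ) + y * I)⁻¹ :=
    fun s hs hs0 => integral_comp_eq_add_integral_inv hg.continuousOn hfg (by fun_prop)
      (fun y hy => by simpa [mem_reProdIm] using ⟨hs, hy⟩)
      (fun y h => hs0 (by simpa using congrArg Complex.re h))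
  have hcauchy := integral_boundary_rect_eq_zero_of_differentiableOn g ⟨-a, -b⟩ ⟨a, b⟩ hg
  have hinv := symmRectIntegral_inv ha hb
  simp only [smul_eq_mul] at hcauchy
  rw [symmRectIntegral] at hinv
  rw [symmRectIntegral, hhor (-b) Set.left_mem_uIcc (neg_ne_zero.2 hb.ne'),
    hhor b Set.right_mem_uIcc hb.ne', hver (-a) Set.left_mem_uIcc (neg_ne_zero.2 ha.ne'),
    hver a Set.right_mem_uIcc ha.ne']
  linear_combination hcauchy + hinv

end RectangleResidue

section LegendreRelation

theorem offPeriods_of_abs_re_le_of_abs_im_le {τ z : ℂ} (hτ : 0 < τ.im) (hre : |z.re| ≤ 1 / 2)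
    (him : |z.im| ≤ τ.im / 2) : OffPeriods (τ, z) := by
  have hint : ∀ n : ℤ, |(n : ℝ)| < 1 → n = 0 := fun n hn => by
    rw [← Int.cast_abs] at hn
    exact Int.abs_lt_one_iff.1 (by exact_mod_cast hn)
  refine ⟨hτ, ?_⟩
  rintro ⟨⟨m, n⟩, hw⟩ hz
  simp only [latticePoint] at hz
  have hn : n = 0 := by
    apply hint
    have hzim : z.im = n * τ.im := by simp [hz]
    rw [hzim, abs_mul, abs_of_pos hτ] at him
    nlinarith
  have hm : m = 0 := by
    apply hint
    have hzre : z.re = m := by simp [hz, hn]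
    rw [hzre] at hre
    linarith
  exact hw (by rw [hm, hn]; rfl)

theorem not_inLattice_of_im_eq_neg_half {τ z : ℂ} (hτ : 0 < τ.im) (hz : z.im = -(τ.im / 2)) :
    ¬ InLattice τ z := by
  rintro ⟨m, n, rfl⟩
  have him : (n : ℝ) * τ.im = -(τ.im / 2) := by simpa using hz
  have hprod : (2 * n + 1 : ℝ) * τ.im = 0 := by linear_combination 2 * him
  have hodd : (2 * n + 1 : ℝ) = 0 := (mul_eq_zero.1 hprod).resolve_right hτ.ne'
  have hodd' : 2 * n + 1 = 0 := by exact_mod_cast hodd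
  omega

variable {τ δ : ℂ} {f g : ℂ → ℂ}

theorem integral_half_tau_eq_add (hτ : 0 < τ.im) (hf : ∀ z, ¬ InLattice τ z → ContinuousAt f z)
    (hone : ∀ z, ¬ InLattice τ z → f (z + 1) = f z)
    (htau : ∀ z, ¬ InLattice τ z → f (z + τ) = f z + δ) :
    ∫ x : ℝ in -(1 / 2)..(1 / 2), f (x + (τ.im / 2 : ℝ) * I) =
      (∫ x : ℝ in -(1 / 2)..(1 / 2), f (x + (-(τ.im / 2) : ℝ) * I)) + δ := by
  set φ : ℝ → ℂ := fun x => f (x + (-(τ.im / 2) : ℝ) * I) with hφ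
  have hoff : ∀ x : ℝ, ¬ InLattice τ (x + (-(τ.im / 2) : ℝ) * I) := fun x =>
    not_inLattice_of_im_eq_neg_half hτ (by simp)
  have hper : Function.Periodic φ 1 := fun x => by
    simp only [hφ, ← hone _ (hoff x)]
    congr 1
    push_cast
    ring
  have hcont : Continuous φ := continuous_iff_continuousAt.2 fun x =>
    ContinuousAt.comp (f := fun x : ℝ => (x : ℂ) + (-(τ.im / 2) : ℝ) * I) (hf _ (hoff x))
      (by fun_prop)
  have hshift : Continuous fun x : ℝ => φ (x - τ.re) := hcont.comp (by fun_prop)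
  calc ∫ x : ℝ in -(1 / 2)..(1 / 2), f (x + (τ.im / 2 : ℝ) * I)
      = ∫ x : ℝ in -(1 / 2)..(1 / 2), (φ (x - τ.re) + δ) := by
        refine intervalIntegral.integral_congr fun x _ => ?_
        simp only [hφ, ← htau _ (hoff _)]
        congr 1
        apply Complex.ext <;> simp
        ring
    _ = (∫ x : ℝ in -(1 / 2) - τ.re..-(1 / 2) - τ.re + 1, φ x) + δ := by
        rw [intervalIntegral.integral_add (hshift.intervalIntegrable _ _)
          intervalIntegrable_const, intervalIntegral.integral_comp_sub_right φ,
          intervalIntegral.integral_const]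
        norm_num
        ring_nf
    _ = (∫ x : ℝ in -(1 / 2)..(1 / 2), φ x) + δ := by
        rw [hper.intervalIntegral_add_eq (-(1 / 2) - τ.re) (-(1 / 2))]
        norm_num

theorem quasiPeriod_eq_neg_two_pi_I (hτ : 0 < τ.im)
    (hg : ∀ z, OffPeriods (τ, z) → DifferentiableAt ℂ g z)
    (hfg : ∀ z, OffPeriods (τ, z) → f z = g z + z⁻¹)
    (hone : ∀ z, ¬ InLattice τ z → f (z + 1) = f z)
    (htau : ∀ z, ¬ InLattice τ z → f (z + τ) = f z + δ) : δ = -(2 * Real.pi * I) := by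
  have hoff : ∀ z ∈ Set.uIcc (-(1 / 2) : ℝ) (1 / 2) ×ℂ Set.uIcc (-(τ.im / 2)) (τ.im / 2),
      OffPeriods (τ, z) := by
    rintro z ⟨hre, him⟩
    rw [Set.mem_preimage, Set.uIcc_of_le (by linarith), Set.mem_Icc, ← abs_le] at hre him
    exact offPeriods_of_abs_re_le_of_abs_im_le hτ hre him
  have hf : ∀ z, ¬ InLattice τ z → ContinuousAt f z := fun z hz => by
    have hz' := offPeriods_of_not_inLattice hτ hz
    refine ((hg z hz').continuousAt.add
      (continuousAt_inv₀ (ne_zero_of_not_inLattice hz))).congr_of_eventuallyEq ?_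
    filter_upwards [(isOpen_not_inLattice hτ).mem_nhds hz] with y hy
    exact hfg y (offPeriods_of_not_inLattice hτ hy)
  have hsides : (∫ y : ℝ in -(τ.im / 2)..(τ.im / 2), f ((1 / 2 : ℝ) + y * I)) =
      ∫ y : ℝ in -(τ.im / 2)..(τ.im / 2), f ((-(1 / 2) : ℝ) + y * I) := by
    refine intervalIntegral.integral_congr fun y hy => ?_
    have hoffy : OffPeriods (τ, (-(1 / 2) : ℝ) + y * I) := hoff _ <| by
      rw [mem_reProdIm]
      refine ⟨?_, ?_⟩
      · simpa only [add_re, ofReal_re, re_ofReal_mul, I_re, mul_zero, add_zero] using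
          Set.left_mem_uIcc
      · simpa only [add_im, ofReal_im, im_ofReal_mul, I_im, mul_one, zero_add] using hy
    have hne : ((-(1 / 2) : ℝ) : ℂ) + y * I ≠ 0 := fun h => by
      simpa using congrArg Complex.re h
    simp only [← hone _ (hoffy.not_inLattice hne)]
    congr 1
    push_cast
    ring
  have hresidue := symmRectIntegral_of_simple_pole (f := f) one_half_pos (half_pos hτ)
    (fun z hz => (hg z (hoff z hz)).differentiableWithinAt) (fun z hz _ => hfg z (hoff z hz))
  rw [symmRectIntegral, hsides, integral_half_tau_eq_add hτ hf hone htau] at hresidue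
  linear_combination -hresidue

/-- The **Legendre relation** `τ η₁ - η₂ = 2πi`. -/
theorem IsWeierstrassZeta.add_tau {zeta : ℂ → ℂ → ℂ} {eta1 : ℂ → ℂ}
    (hzeta : IsWeierstrassZeta zeta) (heta1 : IsEta1 zeta eta1) (hτ : 0 < τ.im) {z : ℂ}
    (hz : ¬ InLattice τ z) : zeta τ (z + τ) = zeta τ z + (τ * eta1 τ - 2 * Real.pi * I) := by
  obtain ⟨η, hη⟩ := hzeta.exists_quasiPeriod hτ (inLattice_self τ)
  have hlegendre : η - τ * eta1 τ = -(2 * Real.pi * I) := by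
    refine quasiPeriod_eq_neg_two_pi_I (f := fun y => zeta τ y - eta1 τ * y)
      (g := fun y => zetaReg (τ, y) - eta1 τ * y) hτ (fun y hy => ?_) (fun y hy => ?_)
      (fun y hy => ?_) (fun y hy => ?_)
    · exact (hasDerivAt_zetaReg hy).differentiableAt.sub (by fun_prop)
    · simp only [← hzeta.sub_inv_eq_zetaReg hy]
      ring
    · simp only [heta1 τ hτ y hy]
      ring
    · simp only [← hη y hy]
      ring
  linear_combination hη z hz + hlegendre

theorem IsWeierstrassZeta.add_int_add_int_mul {zeta : ℂ → ℂ → ℂ} {eta1 : ℂ → ℂ}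
    (hzeta : IsWeierstrassZeta zeta) (heta1 : IsEta1 zeta eta1) (hτ : 0 < τ.im) {z : ℂ}
    (hz : ¬ InLattice τ z) (m n : ℤ) :
    zeta τ (z + (m + n * τ)) = zeta τ z + (m + n * τ) * eta1 τ - 2 * Real.pi * I * n := by
  have hone := apply_add_zsmul_of_apply_add (S := {z | ¬ InLattice τ z}) (f := zeta τ)
    (fun z => not_congr (inLattice_add_iff (inLattice_one τ)))
    (fun z hz => by rw [heta1 τ hτ z hz]; ring : ∀ z ∈ _, _ = zeta τ z + eta1 τ) m z hz
  have htau := apply_add_zsmul_of_apply_add (S := {z | ¬ InLattice τ z}) (f := zeta τ)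
    (fun z => not_congr (inLattice_add_iff (inLattice_self τ)))
    (fun z hz => hzeta.add_tau heta1 hτ hz) n _ hone.1
  simp only [zsmul_eq_mul, mul_one] at hone htau
  rw [← add_assoc, htau.2, hone.2]
  ring

end LegendreRelation

end

noncomputable section

section Defect

/-- The expression `W''' - 4 J W' - 2 J_z W + 2 J_t` at `(τ, z)`, i.e. the function `U` of a
potential `J t z` and a coefficient `W z`. It vanishes when `y_zz = J y` and
`y_t = W y_z - (W_z / 2) y` are compatible. -/
def defect (J : ℂ → ℂ → ℂ) (W : ℂ → ℂ) (τ z : ℂ) : ℂ :=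
  deriv (deriv (deriv W)) z - 4 * J τ z * deriv W z - 2 * deriv (J τ) z * W z
    + 2 * deriv (fun t => J t z) τ

variable {J : ℂ → ℂ → ℂ} {W : ℂ → ℂ} {τ z : ℂ}

theorem hasDerivAt_along {f : ℂ × ℂ → ℂ} {q : ℂ → ℂ} {q' : ℂ}
    (hf : DifferentiableAt ℂ f (τ, z)) (hq : HasDerivAt q q' τ) (hz : q τ = z) :
    HasDerivAt (fun t => f (t, q t)) (fderiv ℂ f (τ, z) (1, 0) + q' * fderiv ℂ f (τ, z) (0, 1))
      τ := by
  subst hz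
  refine (hf.hasFDerivAt.comp_hasDerivAt τ ((hasDerivAt_id τ).prodMk hq)).congr_deriv ?_
  rw [show ((1 : ℂ), q') = (1, 0) + q' • (0, 1) by simp, map_add, map_smul, smul_eq_mul]

theorem hasDerivAt_mk_left {f : ℂ × ℂ → ℂ} (hf : DifferentiableAt ℂ f (τ, z)) :
    HasDerivAt (fun t => f (t, z)) (fderiv ℂ f (τ, z) (1, 0)) τ := by
  simpa using hasDerivAt_along hf (hasDerivAt_const τ z) rfl

theorem tendsto_mk_right (τ z : ℂ) : Tendsto (fun w : ℂ => (τ, w)) (𝓝 z) (𝓝 (τ, z)) :=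
  (Continuous.prodMk_right τ).tendsto z

theorem differentiableAt_defect (hJ : ContDiffAt ℂ 2 (fun x : ℂ × ℂ => J x.1 x.2) (τ, z))
    (hW : AnalyticAt ℂ W z) : DifferentiableAt ℂ (defect J W τ) z := by
  have hmk : ContDiffAt ℂ 2 (fun y : ℂ => (τ, y)) z := contDiffAt_const.prodMk contDiffAt_id
  have hJτ : DifferentiableAt ℂ (J τ) z := (hJ.comp z hmk).differentiableAt (by simp)
  have hfderiv : ∀ v, DifferentiableAt ℂ
      (fun y => fderiv ℂ (fun x : ℂ × ℂ => J x.1 x.2) (τ, y) v) z := fun v =>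
    (((hJ.fderiv_right (m := 1) (by norm_num)).comp z (hmk.of_le (by norm_num))).clm_apply
      contDiffAt_const).differentiableAt (by simp)
  have hev : ∀ᶠ y in 𝓝 z, DifferentiableAt ℂ (fun x : ℂ × ℂ => J x.1 x.2) (τ, y) :=
    (tendsto_mk_right τ z).eventually
      ((hJ.eventually (by simp)).mono fun _ hx => hx.differentiableAt (by simp))
  have hJz : DifferentiableAt ℂ (deriv (J τ)) z :=
    (hfderiv (0, 1)).congr_of_eventuallyEq (hev.mono fun _ hy => (hasDerivAt_mk_right hy).deriv)
  have hJt : DifferentiableAt ℂ (fun y => deriv (fun t => J t y) τ) z :=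
    (hfderiv (1, 0)).congr_of_eventuallyEq (hev.mono fun _ hy => (hasDerivAt_mk_left hy).deriv)
  exact ((hW.deriv.deriv.deriv.differentiableAt.sub
    ((hJτ.const_mul 4).mul hW.deriv.differentiableAt)).sub
    ((hJz.const_mul 2).mul hW.differentiableAt)).add (hJt.const_mul 2)

theorem defect_neg (hJ : ∀ᶠ t in 𝓝 τ, ∀ z, J t (-z) = J t z) (hW : ∀ z, W (-z) = -W z) :
    defect J W τ (-z) = defect J W τ z := by
  have hW₁ : ∀ y, deriv W (-y) = deriv W y := fun y => by
    rw [← neg_inj, ← deriv_comp_neg, ← deriv.fun_neg]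
    simp only [hW]
  have hW₃ : deriv (deriv (deriv W)) (-z) = deriv (deriv (deriv W)) z := by
    have h := iteratedDeriv_comp_neg 2 (deriv W) z
    simpa [iteratedDeriv_succ, hW₁] using h.symm
  have hJz : deriv (J τ) (-z) = -deriv (J τ) z := by
    rw [← neg_eq_iff_eq_neg, ← deriv_comp_neg]
    simp only [hJ.self_of_nhds]
  have hJt : deriv (fun t => J t (-z)) τ = deriv (fun t => J t z) τ :=
    EventuallyEq.deriv_eq (hJ.mono fun t ht => ht z)
  rw [defect, hW₃, hJ.self_of_nhds, hW₁, hJz, hW, hJt, defect]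
  ring

/-- A moving translation `q` of the potential is compensated by the gauge change `W ↦ W - q'`. -/
theorem defect_add {q : ℂ → ℂ} {q' : ℂ} (hq : HasDerivAt q q' τ)
    (hJd : DifferentiableAt ℂ (fun x : ℂ × ℂ => J x.1 x.2) (τ, z))
    (hJ : ∀ᶠ x in 𝓝 (τ, z), J x.1 (x.2 + q x.1) = J x.1 x.2)
    (hW : ∀ᶠ y in 𝓝 z, W (y + q τ) = W y - q') :
    defect J W τ (z + q τ) = defect J W τ z := by
  have hW₁ : (fun y => deriv W (y + q τ)) =ᶠ[𝓝 z] deriv W := by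
    filter_upwards [hW.eventually_nhds] with y hy
    rw [← deriv_comp_add_const, EventuallyEq.deriv_eq hy, deriv_sub_const]
  have hW₃ : deriv (deriv (deriv W)) (z + q τ) = deriv (deriv (deriv W)) z := by
    have h := iteratedDeriv_comp_add_const 2 (deriv W) (q τ)
    simp only [iteratedDeriv_succ, iteratedDeriv_zero] at h
    rw [← congrFun h z]
    exact hW₁.deriv.deriv_eq
  have hJz : deriv (J τ) (z + q τ) = deriv (J τ) z := by
    rw [← deriv_comp_add_const]
    exact EventuallyEq.deriv_eq ((tendsto_mk_right τ z).eventually hJ)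
  have hJt : deriv (fun t => J t (z + q τ)) τ =
      deriv (fun t => J t z) τ - q' * deriv (J τ) z := by
    have hcurve : HasDerivAt (fun t => z + q τ - q t) (-q') τ := hq.const_sub (z + q τ)
    have hcurveτ : z + q τ - q τ = z := add_sub_cancel_right z _
    have hpull : (fun t => J t (z + q τ)) =ᶠ[𝓝 τ] fun t => J t (z + q τ - q t) := by
      have htend : Tendsto (fun t => (t, z + q τ - q t)) (𝓝 τ) (𝓝 (τ, z)) := by
        simpa only [hcurveτ] using! (continuousAt_id.prodMk hcurve.continuousAt).tendsto
      filter_upwards [htend.eventually hJ] with t ht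
      rw [← ht, sub_add_cancel]
    rw [hpull.deriv_eq, (hasDerivAt_along hJd hcurve hcurveτ).deriv,
      (hasDerivAt_mk_left hJd).deriv, (hasDerivAt_mk_right hJd).deriv]
    ring
  have hJ₀ : J τ (z + q τ) = J τ z := hJ.self_of_nhds
  have hW₁z : deriv W (z + q τ) = deriv W z := hW₁.self_of_nhds
  rw [defect, hW₃, hJ₀, hW₁z, hJz, hW.self_of_nhds, hJt, defect]
  ring

end Defect

section Taylor

variable {f : ℂ → ℂ}

theorem exists_eq_sum_add_pow_mul_and_deriv_eq (hf : AnalyticAt ℂ f 0) (n : ℕ) :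
    ∃ F : ℂ → ℂ, AnalyticAt ℂ F 0 ∧
      (∀ w, f w = (∑ k ∈ Finset.range n, iteratedDeriv k f 0 / k.factorial * w ^ k)
        + w ^ n * F w) ∧
      ∀ᶠ w in 𝓝 (0 : ℂ), deriv f w =
        (∑ k ∈ Finset.range n, iteratedDeriv k f 0 / k.factorial * (k * w ^ (k - 1)))
          + (n * w ^ (n - 1) * F w + w ^ n * deriv F w) := by
  obtain ⟨F, hF, hfF⟩ := hf.exists_eq_sum_add_pow_mul n
  have hfF' : f = fun w => (∑ k ∈ Finset.range n, iteratedDeriv k f 0 / k.factorial * w ^ k)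
      + w ^ n * F w := by
    funext w
    rw [hfF w]
    congr 1
    exact Finset.sum_congr rfl fun k _ => by rw [smul_eq_mul]; ring
  refine ⟨F, hF, fun w => congrFun hfF' w, ?_⟩
  filter_upwards [hF.eventually_analyticAt] with w hFw
  rw [hfF']
  refine HasDerivAt.deriv (HasDerivAt.add (HasDerivAt.fun_sum fun k _ => ?_)
    ((hasDerivAt_pow n w).mul hFw.differentiableAt.hasDerivAt))
  rw [← hfF']
  exact (hasDerivAt_pow k w).const_mul _

theorem exists_taylor_div_cube_sub_deriv_div_sq (hf : AnalyticAt ℂ f 0) :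
    ∃ E : ℂ → ℂ, Tendsto E (𝓝[≠] 0) (𝓝 (-(deriv (deriv (deriv f)) 0 / 3))) ∧
      ∀ᶠ w in 𝓝[≠] (0 : ℂ), f w * w⁻¹ ^ 3 - deriv f w * w⁻¹ ^ 2 =
        f 0 * w⁻¹ ^ 3 - deriv (deriv f) 0 / 2 * w⁻¹ + E w := by
  obtain ⟨F, hF, hfF, hderiv⟩ := exists_eq_sum_add_pow_mul_and_deriv_eq hf 4
  have hF₀ := hF.continuousAt
  have hF₁ := hF.deriv.continuousAt
  have hE : ContinuousAt (fun w => -(deriv (deriv (deriv f)) 0 / 3)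
      - 3 * w * F w - w ^ 2 * deriv F w) 0 := by
    fun_prop
  refine ⟨_, (hE.tendsto.mono_left nhdsWithin_le_nhds).trans_eq (by simp), ?_⟩
  filter_upwards [nhdsWithin_le_nhds hderiv, self_mem_nhdsWithin] with w hw hw0
  rw [Set.mem_compl_singleton_iff] at hw0
  rw [hw, hfF w]
  simp only [Finset.sum_range_succ, Finset.range_one, Finset.sum_singleton, iteratedDeriv_succ,
    iteratedDeriv_zero, Nat.factorial, Nat.succ_eq_add_one, Nat.reduceMul,
    Nat.reduceSub, Nat.cast_ofNat, Nat.cast_one, Nat.cast_zero, zero_add, zero_tsub, pow_zero,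
    pow_one]
  field_simp
  ring

theorem exists_taylor_div_sq_sub_deriv_div (hf : AnalyticAt ℂ f 0) :
    ∃ E : ℂ → ℂ, Tendsto E (𝓝[≠] 0) (𝓝 (-(3 / 2 * deriv (deriv f) 0))) ∧
      ∀ᶠ w in 𝓝[≠] (0 : ℂ), f w * w⁻¹ ^ 2 - 2 * deriv f w * w⁻¹ =
        f 0 * w⁻¹ ^ 2 - deriv f 0 * w⁻¹ + E w := by
  obtain ⟨F, hF, hfF, hderiv⟩ := exists_eq_sum_add_pow_mul_and_deriv_eq hf 3
  have hF₀ := hF.continuousAt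
  have hF₁ := hF.deriv.continuousAt
  have hE : ContinuousAt (fun w => -(3 / 2 * deriv (deriv f) 0)
      - 5 * w * F w - 2 * w ^ 2 * deriv F w) 0 := by
    fun_prop
  refine ⟨_, (hE.tendsto.mono_left nhdsWithin_le_nhds).trans_eq (by simp), ?_⟩
  filter_upwards [nhdsWithin_le_nhds hderiv, self_mem_nhdsWithin] with w hw hw0
  rw [Set.mem_compl_singleton_iff] at hw0
  rw [hw, hfF w]
  simp only [Finset.sum_range_succ, Finset.range_one, Finset.sum_singleton, iteratedDeriv_succ,
    iteratedDeriv_zero, Nat.factorial, Nat.succ_eq_add_one, Nat.reduceMul,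
    Nat.reduceSub, Nat.cast_ofNat, Nat.cast_one, Nat.cast_zero, zero_add, zero_tsub, pow_zero,
    pow_one]
  field_simp
  ring

theorem exists_taylor_two_mul_div_sq_sub_deriv_div (hf : AnalyticAt ℂ f 0) :
    ∃ E : ℂ → ℂ, Tendsto E (𝓝[≠] 0) (𝓝 0) ∧
      ∀ᶠ w in 𝓝[≠] (0 : ℂ), 2 * f w * w⁻¹ ^ 2 - deriv f w * w⁻¹ =
        2 * f 0 * w⁻¹ ^ 2 + deriv f 0 * w⁻¹ + E w := by
  obtain ⟨F, hF, hfF, hderiv⟩ := exists_eq_sum_add_pow_mul_and_deriv_eq hf 2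
  have hF₁ := hF.deriv.continuousAt
  have hE : ContinuousAt (fun w => -(w * deriv F w)) 0 := by
    fun_prop
  refine ⟨_, (hE.tendsto.mono_left nhdsWithin_le_nhds).trans_eq (by simp), ?_⟩
  filter_upwards [nhdsWithin_le_nhds hderiv, self_mem_nhdsWithin] with w hw hw0
  rw [Set.mem_compl_singleton_iff] at hw0
  rw [hw, hfF w]
  simp only [Finset.sum_range_succ, Finset.range_one, Finset.sum_singleton, iteratedDeriv_succ,
    iteratedDeriv_zero, Nat.factorial, Nat.succ_eq_add_one, Nat.reduceMul,
    Nat.reduceSub, Nat.cast_ofNat, Nat.cast_one, Nat.cast_zero, zero_add, zero_tsub, pow_zero,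
    pow_one]
  field_simp
  ring

end Taylor

section MovingPole

variable {J : ℂ → ℂ → ℂ} {W G : ℂ → ℂ} {C : ℂ × ℂ → ℂ} {s b : ℂ → ℂ} {τ s' b' a c : ℂ}

theorem hasDerivAt_inv_sq {w : ℂ} (hw : w ≠ 0) :
    HasDerivAt (fun y : ℂ => y⁻¹ ^ 2) (-2 * w⁻¹ ^ 3) w := by
  refine ((hasDerivAt_inv hw).fun_pow 2).congr_deriv ?_
  rw [inv_pow, Nat.cast_two, pow_one]
  ring

theorem eventually_differentiableAt_mk (hC : ContDiffAt ℂ 2 C (τ, 0)) :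
    ∀ᶠ w in 𝓝 (0 : ℂ), DifferentiableAt ℂ C (τ, w) :=
  (tendsto_mk_right τ 0).eventually
    ((hC.eventually (by simp)).mono fun _ hx => hx.differentiableAt (by simp))

theorem analyticAt_mk_right (hC : ContDiffAt ℂ 2 C (τ, 0)) :
    AnalyticAt ℂ (fun w => C (τ, w)) 0 :=
  analyticAt_iff_eventually_differentiableAt.2 <|
    (eventually_differentiableAt_mk hC).mono fun _ hw => (hasDerivAt_mk_right hw).differentiableAt

theorem continuousAt_fderiv_mk_right (hC : ContDiffAt ℂ 2 C (τ, 0)) (v : ℂ × ℂ) :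
    ContinuousAt (fun w => fderiv ℂ C (τ, w) v) 0 := by
  have h := ((hC.fderiv_right (m := 1) (by norm_num)).clm_apply
    (contDiffAt_const (c := v))).continuousAt
  exact h.tendsto.comp (tendsto_mk_right τ 0)

theorem eventually_deriv_right_of_polar (hC : ContDiffAt ℂ 2 C (τ, 0))
    (hJ : ∀ t w, J t (s t + w) = a * w⁻¹ ^ 2 + b t * w⁻¹ + C (t, w)) :
    ∀ᶠ w in 𝓝[≠] (0 : ℂ), deriv (J τ) (s τ + w) =
      -2 * a * w⁻¹ ^ 3 - b τ * w⁻¹ ^ 2 + fderiv ℂ C (τ, w) (0, 1) := by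
  filter_upwards [nhdsWithin_le_nhds (eventually_differentiableAt_mk hC), self_mem_nhdsWithin]
    with w hw hw0
  rw [← deriv_comp_const_add]
  simp only [hJ]
  rw [((((hasDerivAt_inv_sq hw0).const_mul a).fun_add
    ((hasDerivAt_inv hw0).const_mul (b τ))).fun_add (hasDerivAt_mk_right hw)).deriv]
  ring

theorem eventually_deriv_left_of_polar (hC : ContDiffAt ℂ 2 C (τ, 0)) (hs : HasDerivAt s s' τ)
    (hb : HasDerivAt b b' τ)
    (hJ : ∀ t w, J t (s t + w) = a * w⁻¹ ^ 2 + b t * w⁻¹ + C (t, w)) :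
    ∀ᶠ w in 𝓝[≠] (0 : ℂ), deriv (fun t => J t (s τ + w)) τ =
      2 * a * s' * w⁻¹ ^ 3 + b' * w⁻¹ + b τ * s' * w⁻¹ ^ 2 + fderiv ℂ C (τ, w) (1, 0)
        - s' * fderiv ℂ C (τ, w) (0, 1) := by
  filter_upwards [nhdsWithin_le_nhds (eventually_differentiableAt_mk hC), self_mem_nhdsWithin]
    with w hw hw0
  set q : ℂ → ℂ := fun t => w + s τ - s t with hqdef
  have hqτ : q τ = w := add_sub_cancel_right w _
  have hq : HasDerivAt q (-s') τ := hs.const_sub (w + s τ)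
  have hJq : (fun t => J t (s τ + w)) =
      fun t => a * (q t)⁻¹ ^ 2 + b t * (q t)⁻¹ + C (t, q t) := by
    funext t
    rw [← hJ, hqdef, add_sub_cancel, add_comm]
  have hinv := HasDerivAt.comp τ (h₂ := fun y : ℂ => y⁻¹) (hqτ.symm ▸ hasDerivAt_inv hw0) hq
  have hsq := HasDerivAt.comp τ (h₂ := fun y : ℂ => y⁻¹ ^ 2)
    (hqτ.symm ▸ hasDerivAt_inv_sq hw0) hq
  rw [hJq]
  refine (((hsq.const_mul a).fun_add (hb.fun_mul hinv)).fun_add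
    (hasDerivAt_along hw hq hqτ)).deriv.trans ?_
  simp only [Function.comp_apply, hqτ]
  ring

theorem eventually_deriv_of_simple_pole {σ : ℂ} (hG : AnalyticAt ℂ G 0)
    (hW : ∀ w, W (σ + w) = c * w⁻¹ + G w) :
    ∀ᶠ w in 𝓝[≠] (0 : ℂ), deriv W (σ + w) = -c * w⁻¹ ^ 2 + deriv G w := by
  filter_upwards [self_mem_nhdsWithin, nhdsWithin_le_nhds hG.eventually_analyticAt] with w hw0 hGw
  rw [← deriv_comp_const_add]
  simp only [hW]
  rw [(((hasDerivAt_inv hw0).const_mul c).fun_add hGw.differentiableAt.hasDerivAt).deriv]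
  ring

theorem eventually_deriv_three_of_simple_pole {σ : ℂ} (hG : AnalyticAt ℂ G 0)
    (hW : ∀ w, W (σ + w) = c * w⁻¹ + G w) :
    ∀ᶠ w in 𝓝[≠] (0 : ℂ), deriv (deriv (deriv W)) (σ + w) =
      -6 * c * w⁻¹ ^ 4 + deriv (deriv (deriv G)) w := by
  have hW₂ : (fun w => deriv (deriv W) (σ + w)) =ᶠ[𝓝[≠] 0]
      fun w => 2 * c * w⁻¹ ^ 3 + deriv (deriv G) w := by
    filter_upwards [self_mem_nhdsWithin, nhdsWithin_le_nhds hG.eventually_analyticAt,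
      EventuallyEq.nhdsNE_deriv (eventually_deriv_of_simple_pole hG hW)] with w hw0 hGw hw
    rw [← deriv_comp_const_add, hw, (((hasDerivAt_inv_sq hw0).const_mul (-c)).fun_add
      hGw.deriv.differentiableAt.hasDerivAt).deriv]
    ring
  filter_upwards [self_mem_nhdsWithin, nhdsWithin_le_nhds hG.eventually_analyticAt,
    hW₂.nhdsNE_deriv] with w hw0 hGw hw
  rw [← deriv_comp_const_add, hw, ((((hasDerivAt_inv hw0).fun_pow 3).const_mul (2 * c)).fun_add
    hGw.deriv.deriv.differentiableAt.hasDerivAt).deriv]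
  field_simp
  ring

theorem eventually_defect_eq_of_polar (hC : ContDiffAt ℂ 2 C (τ, 0)) (hs : HasDerivAt s s' τ)
    (hb : HasDerivAt b b' τ)
    (hJ : ∀ t w, J t (s t + w) = a * w⁻¹ ^ 2 + b t * w⁻¹ + C (t, w))
    (hG : AnalyticAt ℂ G 0) (hW : ∀ w, W (s τ + w) = c * w⁻¹ + G w) :
    ∀ᶠ w in 𝓝[≠] (0 : ℂ), defect J W τ (s τ + w) =
      c * (8 * a - 6) * w⁻¹ ^ 4 + 6 * b τ * c * w⁻¹ ^ 3
      + 4 * a * ((G w + s') * w⁻¹ ^ 3 - deriv G w * w⁻¹ ^ 2)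
      + 2 * b τ * ((G w + s') * w⁻¹ ^ 2 - 2 * deriv G w * w⁻¹)
      + 2 * c * (2 * C (τ, w) * w⁻¹ ^ 2 - fderiv ℂ C (τ, w) (0, 1) * w⁻¹) + 2 * b' * w⁻¹
      + (deriv (deriv (deriv G)) w - 4 * C (τ, w) * deriv G w
        - 2 * fderiv ℂ C (τ, w) (0, 1) * (G w + s') + 2 * fderiv ℂ C (τ, w) (1, 0)) := by
  filter_upwards [eventually_deriv_of_simple_pole hG hW,
    eventually_deriv_three_of_simple_pole hG hW, eventually_deriv_right_of_polar hC hJ,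
    eventually_deriv_left_of_polar hC hs hb hJ] with w hW₁ hW₃ hJz hJt
  rw [defect, hW₁, hW₃, hJz, hJt, hJ, hW]
  ring

theorem exists_defect_expansion_of_polar (hC : ContDiffAt ℂ 2 C (τ, 0)) (hs : HasDerivAt s s' τ)
    (hb : HasDerivAt b b' τ)
    (hJ : ∀ t w, J t (s t + w) = a * w⁻¹ ^ 2 + b t * w⁻¹ + C (t, w))
    (hG : AnalyticAt ℂ G 0) (hW : ∀ w, W (s τ + w) = c * w⁻¹ + G w) :
    ∃ E : ℂ → ℂ,
      Tendsto E (𝓝[≠] 0) (𝓝 ((1 - 4 / 3 * a) * deriv (deriv (deriv G)) 0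
        - 3 * b τ * deriv (deriv G) 0 - 4 * C (τ, 0) * deriv G 0
        - 2 * fderiv ℂ C (τ, 0) (0, 1) * (G 0 + s') + 2 * fderiv ℂ C (τ, 0) (1, 0))) ∧
      ∀ᶠ w in 𝓝[≠] (0 : ℂ), defect J W τ (s τ + w) =
        c * (8 * a - 6) * w⁻¹ ^ 4
        + (6 * b τ * c + 4 * a * (G 0 + s')) * w⁻¹ ^ 3
        + (4 * c * C (τ, 0) + 2 * b τ * (G 0 + s')) * w⁻¹ ^ 2
        + (2 * c * fderiv ℂ C (τ, 0) (0, 1) + 2 * b' - 2 * a * deriv (deriv G) 0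
          - 2 * b τ * deriv G 0) * w⁻¹ + E w := by
  have hGs : AnalyticAt ℂ (fun w => G w + s') 0 := hG.add analyticAt_const
  have hGs' : deriv (fun w => G w + s') = deriv G := funext fun w => deriv_add_const s'
  obtain ⟨E₁, hE₁, hD₁⟩ := exists_taylor_div_cube_sub_deriv_div_sq hGs
  obtain ⟨E₂, hE₂, hD₂⟩ := exists_taylor_div_sq_sub_deriv_div hGs
  obtain ⟨E₃, hE₃, hD₃⟩ := exists_taylor_two_mul_div_sq_sub_deriv_div (analyticAt_mk_right hC)
  rw [hGs'] at hE₁ hD₁ hE₂ hD₂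
  have hG₀ := hG.continuousAt
  have hG₁ := hG.deriv.continuousAt
  have hG₃ := hG.deriv.deriv.deriv.continuousAt
  have hCz := continuousAt_fderiv_mk_right hC (0, 1)
  have hCt := continuousAt_fderiv_mk_right hC (1, 0)
  have hregular : ContinuousAt (fun w => deriv (deriv (deriv G)) w - 4 * C (τ, w) * deriv G w
      - 2 * fderiv ℂ C (τ, w) (0, 1) * (G w + s') + 2 * fderiv ℂ C (τ, w) (1, 0)) 0 := by
    fun_prop
  refine ⟨_, ((((hE₁.const_mul (4 * a)).add (hE₂.const_mul (2 * b τ))).add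
    (hE₃.const_mul (2 * c))).add (hregular.tendsto.mono_left nhdsWithin_le_nhds)).trans_eq
    (congrArg 𝓝 (by ring)), ?_⟩
  filter_upwards [eventually_defect_eq_of_polar hC hs hb hJ hG hW, hD₁, hD₂, hD₃,
    nhdsWithin_le_nhds (eventually_differentiableAt_mk hC)] with w hw h₁ h₂ h₃ hCw
  rw [(hasDerivAt_mk_right hCw).deriv,
    (hasDerivAt_mk_right (hC.differentiableAt (by simp))).deriv] at h₃
  rw [hw]
  linear_combination 4 * a * h₁ + 2 * b τ * h₂ + 2 * c * h₃

theorem deriv_deriv_zero_of_eventually_odd {k : ℂ}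
    (hodd : ∀ᶠ w in 𝓝 (0 : ℂ), G (-w) + k = -(G w + k)) : deriv (deriv G) 0 = 0 := by
  have hderiv : ∀ᶠ w in 𝓝 (0 : ℂ), deriv G (-w) = deriv G w := by
    filter_upwards [hodd.eventually_nhds] with w hw
    have h := EventuallyEq.deriv_eq hw
    rw [deriv_add_const, deriv.fun_neg, deriv_add_const, deriv_comp_neg] at h
    exact neg_injective h
  have h := EventuallyEq.deriv_eq hderiv
  rw [deriv_comp_neg, neg_zero] at h
  exact self_eq_neg.1 h.symm

theorem exists_tendsto_defect_of_eventually_odd (hC : ContDiffAt ℂ 2 C (τ, 0))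
    (hs : HasDerivAt s s' τ) (hJ : ∀ t w, J t (s t + w) = a * w⁻¹ ^ 2 + C (t, w))
    (hW : AnalyticAt ℂ (fun w => W (s τ + w)) 0)
    (hodd : ∀ᶠ w in 𝓝 (0 : ℂ), W (s τ + -w) + s' = -(W (s τ + w) + s')) :
    ∃ L : ℂ, Tendsto (fun w => defect J W τ (s τ + w)) (𝓝[≠] 0) (𝓝 L) := by
  obtain ⟨E, hE, hD⟩ := exists_defect_expansion_of_polar (W := W) (G := fun w => W (s τ + w))
    (b := 0) (b' := 0) (c := 0) hC hs (hasDerivAt_const τ 0) (by simpa using hJ) hW (by simp)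
  have hvalue : W (s τ + 0) + s' = 0 := by
    have h := hodd.self_of_nhds
    rw [neg_zero] at h
    exact self_eq_neg.1 h
  have hvanish : ∀ᶠ w in 𝓝[≠] (0 : ℂ), defect J W τ (s τ + w) = E w := by
    filter_upwards [hD] with w hw
    rw [hw, hvalue, deriv_deriv_zero_of_eventually_odd hodd, Pi.zero_apply]
    ring
  exact ⟨_, hE.congr' (hvanish.mono fun _ hw => hw.symm)⟩

theorem polar_coefficients_eq_zero {a₁ a₂ a₃ L : ℂ} {E : ℂ → ℂ} (hE : Tendsto E (𝓝[≠] 0) (𝓝 L))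
    (h : ∀ᶠ w in 𝓝[≠] (0 : ℂ), a₃ * w⁻¹ ^ 3 + a₂ * w⁻¹ ^ 2 + a₁ * w⁻¹ + E w = 0) :
    a₃ = 0 ∧ a₂ = 0 ∧ a₁ = 0 := by
  set q : Polynomial ℂ := .C a₃ * .X ^ 3 + .C a₂ * .X ^ 2 + .C a₁ * .X with hq
  have hdegree : q.degree ≤ 0 := by
    by_contra! hpos
    have hinv : Tendsto (fun w : ℂ => ‖w⁻¹‖) (𝓝[≠] 0) atTop :=
      tendsto_norm_inv_nhdsNE_zero_atTop
    have hbounded : Tendsto (fun w => ‖E w‖) (𝓝[≠] 0) atTop := by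
      refine (q.tendsto_norm_atTop hpos hinv).congr' (h.mono fun w hw => ?_)
      refine (congrArg norm ?_).trans (norm_neg (E w))
      simp only [hq, Polynomial.eval_add, Polynomial.eval_mul, Polynomial.eval_C,
        Polynomial.eval_pow, Polynomial.eval_X]
      linear_combination hw
    exact not_tendsto_nhds_of_tendsto_atTop hbounded _ hE.norm
  have hcoeff : ∀ k : ℕ, 0 < k → q.coeff k = 0 := fun k hk =>
    Polynomial.coeff_eq_zero_of_degree_lt (hdegree.trans_lt (by exact_mod_cast hk))
  have h₁ := hcoeff 1 one_pos
  have h₂ := hcoeff 2 two_pos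
  have h₃ := hcoeff 3 three_pos
  simp only [hq, Polynomial.coeff_add, Polynomial.coeff_C_mul, Polynomial.coeff_X_pow,
    Polynomial.coeff_X, OfNat.one_ne_ofNat, Nat.reduceEqDiff, ↓reduceIte,
    mul_zero, mul_one, add_zero, zero_add] at h₁ h₂ h₃
  exact ⟨h₃, h₂, h₁⟩

end MovingPole

end

noncomputable section

section Liouville

variable {f g : ℂ → ℂ} {τ : ℂ}

theorem map_add_right_nhdsNE (z a : ℂ) : map (· + a) (𝓝[≠] z) = 𝓝[≠] (z + a) :=
  (Homeomorph.addRight a).map_punctured_nhds_eq z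

theorem tendsto_comp_add_left_nhdsNE_zero {s : ℂ} {l : Filter ℂ} :
    Tendsto (fun w => f (s + w)) (𝓝[≠] 0) l ↔ Tendsto f (𝓝[≠] s) l := by
  conv_rhs => rw [← zero_add s, ← map_add_right_nhdsNE, tendsto_map'_iff]
  simp only [Function.comp_def, add_comm]

theorem exists_differentiable_of_forall_tendsto_nhdsNE
    (hf : ∀ z, ∀ᶠ y in 𝓝[≠] z, DifferentiableAt ℂ f y)
    (hlim : ∀ z, ∃ L, Tendsto f (𝓝[≠] z) (𝓝 L)) :
    ∃ g : ℂ → ℂ, Differentiable ℂ g ∧ ∀ z, Tendsto f (𝓝[≠] z) (𝓝 (g z)) := by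
  choose g hg using hlim
  refine ⟨g, fun z => ?_, hg⟩
  have hupdate : ∀ᶠ y in 𝓝[≠] z, DifferentiableAt ℂ (Function.update f z (g z)) y := by
    filter_upwards [hf z, self_mem_nhdsWithin] with y hy hne
    refine hy.congr_of_eventuallyEq ?_
    filter_upwards [isOpen_ne.mem_nhds hne] with x hx
    exact Function.update_of_ne hx _ _
  have hanalytic := Complex.analyticAt_of_differentiable_on_punctured_nhds_of_continuousAt hupdate
    (continuousAt_update_same.2 (hg z))
  have heq : ∀ᶠ y in 𝓝[≠] z, g y = Function.update f z (g z) y := by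
    filter_upwards [hf z, self_mem_nhdsWithin] with y hy hne
    rw [Function.update_of_ne hne]
    exact tendsto_nhds_unique (hg y) (hy.continuousAt.tendsto.mono_left nhdsWithin_le_nhds)
  refine hanalytic.differentiableAt.congr_of_eventuallyEq ?_
  filter_upwards [eventually_nhdsWithin_iff.1 heq] with y hy
  rcases eq_or_ne y z with rfl | hne
  · rw [Function.update_self]
  · exact hy hne

theorem apply_eq_apply_of_differentiable_of_periodic (hτ : 0 < τ.im) (hg : Differentiable ℂ g)
    (hper : ∀ l, InLattice τ l → ∀ z, g (z + l) = g z) (z w : ℂ) : g z = g w := by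
  set b := (standardPair τ hτ).basis
  refine hg.apply_eq_apply_of_bounded ?_ z w
  have hcompact := (ZSpan.fundamentalDomain_isBounded b).isCompact_closure
  refine (hcompact.image hg.continuous).isBounded.subset ?_
  rintro _ ⟨y, rfl⟩
  refine ⟨ZSpan.fract b y, subset_closure (ZSpan.fract_mem_fundamentalDomain b y), ?_⟩
  have hfloor : InLattice τ (ZSpan.floor b y) := by
    rw [← mem_standardPair_lattice hτ, PeriodPair.lattice_eq_span_range_basis]
    exact (ZSpan.floor b y).2
  rw [← hper _ hfloor, ZSpan.fract_apply, sub_add_cancel]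

theorem eq_zero_of_doublyPeriodic_of_tendsto (hτ : 0 < τ.im)
    (hf : ∀ z, ∀ᶠ y in 𝓝[≠] z, DifferentiableAt ℂ f y)
    (hlim : ∀ z, ∃ L, Tendsto f (𝓝[≠] z) (𝓝 L))
    (hper : ∀ l, InLattice τ l → ∀ z, ∀ᶠ y in 𝓝[≠] z, f (y + l) = f y)
    {q : ℂ} (hq : Tendsto f (𝓝[≠] q) (𝓝 0)) {z : ℂ} (hz : ContinuousAt f z) : f z = 0 := by
  obtain ⟨g, hgd, hg⟩ := exists_differentiable_of_forall_tendsto_nhdsNE hf hlim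
  have hgper : ∀ l, InLattice τ l → ∀ z, g (z + l) = g z := fun l hl z => by
    have h := hg (z + l)
    rw [← map_add_right_nhdsNE, tendsto_map'_iff] at h
    exact tendsto_nhds_unique (h.congr' (hper l hl z)) (hg z)
  calc f z = g z := tendsto_nhds_unique (hz.tendsto.mono_left nhdsWithin_le_nhds) (hg z)
    _ = g q := apply_eq_apply_of_differentiable_of_periodic hτ hgd hgper z q
    _ = 0 := tendsto_nhds_unique (hg q) hq

end Liouville

end

noncomputable section

section MovingArgument

variable {u : ℂ × ℂ → ℂ} {x : ℂ × ℂ} {m : ℕ} {τ z : ℂ}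

theorem contDiffAt_apply_fst {f : ℂ → ℂ → ℂ}
    (hf : ContDiffAt ℂ m (fun y : ℂ × ℂ => f y.1 y.2) (x.1, u x)) (hu : ContDiffAt ℂ m u x) :
    ContDiffAt ℂ m (fun y : ℂ × ℂ => f y.1 (u y)) x :=
  ContDiffAt.comp (g := fun y : ℂ × ℂ => f y.1 y.2) x hf (contDiffAt_fst.prodMk hu)

theorem eventually_not_inLattice_apply (hx : 0 < x.1.im) (hu : ContinuousAt u x)
    (h : ¬ InLattice x.1 (u x)) : ∀ᶠ y in 𝓝 x, ¬ InLattice y.1 (u y) := by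
  have htendsto : Tendsto (fun y : ℂ × ℂ => (y.1, u y)) (𝓝 x) (𝓝 (x.1, u x)) :=
    continuousAt_fst.prodMk hu
  filter_upwards [htendsto.eventually (eventually_offPeriods (offPeriods_of_not_inLattice hx h)),
    hu.eventually_ne (ne_zero_of_not_inLattice h)] with y hy hy0
  exact hy.not_inLattice hy0

theorem hasDerivAt_wp (hτ : 0 < τ.im) (hz : ¬ InLattice τ z) : HasDerivAt (wp τ) (wpd τ z) z :=
  (hasDerivAt_mk_right
    ((contDiffAt_wp hτ hz 1).differentiableAt (by simp))).differentiableAt.hasDerivAt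

theorem hasDerivAt_wp_sub_inv_sq_zero (hτ : 0 < τ.im) :
    HasDerivAt (fun w => wp τ w - w⁻¹ ^ 2) 0 0 := by
  have hdiff : DifferentiableAt ℂ (fun w => wp τ w - w⁻¹ ^ 2) 0 := (hasDerivAt_mk_right
    ((contDiffAt_wp_sub_inv_sq (offPeriods_zero hτ) 1).differentiableAt (by simp))).differentiableAt
  have hderiv : deriv (fun w => wp τ w - w⁻¹ ^ 2) 0 = 0 := by
    have h := deriv_comp_neg (fun w => wp τ w - w⁻¹ ^ 2) 0
    simp only [wp_neg hτ, inv_neg, neg_sq, neg_zero] at h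
    exact self_eq_neg.1 h
  exact hdiff.hasDerivAt.congr_deriv hderiv

theorem IsWeierstrassZeta.hasDerivAt_sub_inv {zeta : ℂ → ℂ → ℂ} (hzeta : IsWeierstrassZeta zeta)
    (h : OffPeriods (τ, z)) :
    HasDerivAt (fun w => zeta τ w - w⁻¹) (-(wp τ z - z⁻¹ ^ 2)) z := by
  refine (hasDerivAt_zetaReg h).congr_of_eventuallyEq ?_
  filter_upwards [(tendsto_mk_right τ z).eventually (eventually_offPeriods h)] with w hw
  exact hzeta.sub_inv_eq_zetaReg hw

theorem IsWeierstrassZeta.hasDerivAt_sub_inv_zero {zeta : ℂ → ℂ → ℂ}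
    (hzeta : IsWeierstrassZeta zeta) (hτ : 0 < τ.im) :
    HasDerivAt (fun w => zeta τ w - w⁻¹) 0 0 := by
  simpa [wp_zero] using hzeta.hasDerivAt_sub_inv (offPeriods_zero hτ)

end MovingArgument

/-- The polar data of a family of elliptic functions of `z` indexed by `τ`: at `z = pole i τ` the
principal part is `double i / (z - pole i τ) ^ 2 + residue i τ / (z - pole i τ)`. The coefficients
of the double poles do not depend on `τ`. -/
structure PolarData (ι : Type*) where
  double : ι → ℂ
  residue : ι → ℂ → ℂ
  pole : ι → ℂ → ℂ

namespace PolarData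

variable {ι : Type*} (P : PolarData ι) (zeta : ℂ → ℂ → ℂ)

/-- The combination of translates of `℘` and `ζ` with the principal parts indexed by `F`. -/
def ellipticSum (F : Finset ι) (t z : ℂ) : ℂ :=
  ∑ i ∈ F, (P.double i * wp t (z - P.pole i t) + P.residue i t * zeta t (z - P.pole i t))

/-- `z` is not congruent to a pole indexed by `F`. -/
def OffPoles (F : Finset ι) (t z : ℂ) : Prop :=
  ∀ i ∈ F, ¬ InLattice t (z - P.pole i t)

/-- The `ellipticSum` over all indices minus its principal part at the pole `j`, as a function of
`t` and of the distance to that pole. -/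
def regularPart [Fintype ι] [DecidableEq ι] (j : ι) (y : ℂ × ℂ) : ℂ :=
  P.double j * (wp y.1 y.2 - y.2⁻¹ ^ 2) + P.residue j y.1 * (zeta y.1 y.2 - y.2⁻¹)
    + P.ellipticSum zeta (Finset.univ.erase j) y.1 (P.pole j y.1 + y.2)

variable {P zeta} {F : Finset ι} {τ z : ℂ} {m : ℕ}

theorem eventually_offPoles (hτ : 0 < τ.im) (hpole : ∀ i, ContinuousAt (P.pole i) τ)
    (h : P.OffPoles F τ z) : ∀ᶠ y in 𝓝 (τ, z), P.OffPoles F y.1 y.2 :=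
  (eventually_all_finset F).2 fun i hi => eventually_not_inLattice_apply hτ
    (continuousAt_snd.sub ((hpole i).comp continuousAt_fst)) (h i hi)

theorem eventually_offPoles_nhdsNE (hτ : 0 < τ.im) (z : ℂ) :
    ∀ᶠ y in 𝓝[≠] z, P.OffPoles F τ y := by
  refine (eventually_all_finset F).2 fun i _ => ?_
  have h := eventually_not_inLattice hτ (z + -P.pole i τ)
  rw [← map_add_right_nhdsNE, eventually_map] at h
  simpa only [← sub_eq_add_neg] using h

theorem contDiffAt_ellipticSum (hzeta : IsWeierstrassZeta zeta) {x : ℂ × ℂ} {u : ℂ × ℂ → ℂ}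
    (hx : 0 < x.1.im) (hres : ∀ i, ContDiffAt ℂ m (P.residue i) x.1)
    (hpole : ∀ i, ContDiffAt ℂ m (P.pole i) x.1) (hu : ContDiffAt ℂ m u x)
    (h : P.OffPoles F x.1 (u x)) :
    ContDiffAt ℂ m (fun y : ℂ × ℂ => P.ellipticSum zeta F y.1 (u y)) x := by
  refine ContDiffAt.sum fun i hi => ?_
  have hsub : ContDiffAt ℂ m (fun y : ℂ × ℂ => u y - P.pole i y.1) x :=
    hu.sub ((hpole i).comp x contDiffAt_fst)
  exact (contDiffAt_const.mul (contDiffAt_apply_fst (contDiffAt_wp hx (h i hi) m) hsub)).add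
    (((hres i).comp x contDiffAt_fst).mul
      (contDiffAt_apply_fst (hzeta.contDiffAt hx (h i hi) m) hsub))

theorem hasDerivAt_ellipticSum (hzeta : IsWeierstrassZeta zeta) (hτ : 0 < τ.im)
    (h : P.OffPoles F τ z) :
    HasDerivAt (P.ellipticSum zeta F τ)
      (∑ i ∈ F, (P.double i * wpd τ (z - P.pole i τ) - P.residue i τ * wp τ (z - P.pole i τ)))
      z := by
  refine HasDerivAt.fun_sum fun i hi => ?_
  refine ((((hasDerivAt_wp hτ (h i hi)).comp_sub_const z _).const_mul (P.double i)).fun_add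
    ((((hzeta τ hτ).2.1 _ (h i hi)).comp_sub_const z _).const_mul (P.residue i τ))).congr_deriv ?_
  ring

theorem ellipticSum_add_int_add_int_mul {eta1 : ℂ → ℂ} (hzeta : IsWeierstrassZeta zeta)
    (heta1 : IsEta1 zeta eta1) (hτ : 0 < τ.im) (h : P.OffPoles F τ z) (a b : ℤ) :
    P.ellipticSum zeta F τ (z + (a + b * τ)) = P.ellipticSum zeta F τ z
      + (∑ i ∈ F, P.residue i τ) * ((a + b * τ) * eta1 τ - 2 * Real.pi * I * b) := by
  simp only [ellipticSum, Finset.sum_mul, ← Finset.sum_add_distrib]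
  refine Finset.sum_congr rfl fun i hi => ?_
  rw [add_sub_right_comm, wp_add_of_inLattice hτ ⟨a, b, rfl⟩,
    hzeta.add_int_add_int_mul heta1 hτ (h i hi)]
  ring

section RegularPart

variable [Fintype ι] [DecidableEq ι]

theorem ellipticSum_univ_pole_add (j : ι) (t w : ℂ) :
    P.ellipticSum zeta Finset.univ t (P.pole j t + w) =
      P.double j * w⁻¹ ^ 2 + P.residue j t * w⁻¹ + P.regularPart zeta j (t, w) := by
  rw [ellipticSum, ← Finset.add_sum_erase _ _ (Finset.mem_univ j), regularPart, ellipticSum,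
    add_sub_cancel_left]
  ring

theorem contDiffAt_regularPart (hzeta : IsWeierstrassZeta zeta) (hτ : 0 < τ.im)
    (hres : ∀ i, ContDiffAt ℂ m (P.residue i) τ) (hpole : ∀ i, ContDiffAt ℂ m (P.pole i) τ)
    {j : ι} (hj : P.OffPoles (Finset.univ.erase j) τ (P.pole j τ)) :
    ContDiffAt ℂ m (P.regularPart zeta j) (τ, 0) := by
  have hoff := offPeriods_zero hτ
  have hpole_fst : ContDiffAt ℂ m (fun y : ℂ × ℂ => P.pole j y.1 + y.2) (τ, 0) :=
    ((hpole j).comp (τ, (0 : ℂ)) contDiffAt_fst).add contDiffAt_snd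
  exact ((contDiffAt_const.mul (contDiffAt_wp_sub_inv_sq hoff m)).add
    (((hres j).comp (τ, (0 : ℂ)) contDiffAt_fst).mul (hzeta.contDiffAt_sub_inv hoff m))).add
    (contDiffAt_ellipticSum hzeta hτ hres hpole hpole_fst (by simpa only [add_zero] using hj))

theorem regularPart_zero (hzeta : IsWeierstrassZeta zeta) (hτ : 0 < τ.im) (j : ι) :
    P.regularPart zeta j (τ, 0) = P.ellipticSum zeta (Finset.univ.erase j) τ (P.pole j τ) := by
  simp only [regularPart, wp_zero, hzeta.apply_zero hτ, inv_zero, add_zero]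
  ring

theorem hasDerivAt_regularPart_zero (hzeta : IsWeierstrassZeta zeta) (hτ : 0 < τ.im) {j : ι}
    (hj : P.OffPoles (Finset.univ.erase j) τ (P.pole j τ)) :
    HasDerivAt (fun w => P.regularPart zeta j (τ, w))
      (∑ i ∈ Finset.univ.erase j, (P.double i * wpd τ (P.pole j τ - P.pole i τ)
        - P.residue i τ * wp τ (P.pole j τ - P.pole i τ))) 0 := by
  rw [← add_zero (P.pole j τ)] at hj
  refine (((hasDerivAt_wp_sub_inv_sq_zero hτ).const_mul (P.double j)).fun_add
    ((hzeta.hasDerivAt_sub_inv_zero hτ).const_mul (P.residue j τ))).fun_add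
    ((hasDerivAt_ellipticSum hzeta hτ hj).comp_const_add (P.pole j τ) 0) |>.congr_deriv ?_
  simp only [mul_zero, add_zero, zero_add]

end RegularPart

end PolarData

end

noncomputable section

section HalfPeriods

/-- The coefficient of `1` in the half-period generator `halfp τ k`. -/
def halfpOne : Fin 4 → ℤ := ![0, 1, 0, 1]

/-- The coefficient of `τ` in the half-period generator `halfp τ k`. -/
def halfpTau : Fin 4 → ℤ := ![0, 0, 1, 1]

variable {τ : ℂ}

theorem halfp_eq (τ : ℂ) (k : Fin 4) : halfp τ k = halfpOne k + halfpTau k * τ := by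
  fin_cases k <;> simp [halfp, halfpOne, halfpTau]

theorem inLattice_halfp (τ : ℂ) (k : Fin 4) : InLattice τ (halfp τ k) :=
  ⟨halfpOne k, halfpTau k, halfp_eq τ k⟩

theorem hasDerivAt_halfp (τ : ℂ) (k : Fin 4) :
    HasDerivAt (fun t => halfp t k) (halfpTau k) τ := by
  simp only [halfp_eq]
  exact (((hasDerivAt_id' τ).const_mul (halfpTau k : ℂ)).const_add _).congr_deriv (mul_one _)

theorem contDiff_halfp (k : Fin 4) {m : ℕ} : ContDiff ℂ m (fun t => halfp t k) := by
  simp only [halfp_eq]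
  fun_prop

theorem halfpOne_halfpTau_injective_mod_two {j k : Fin 4} (hOne : halfpOne k % 2 = halfpOne j % 2)
    (hTau : halfpTau k % 2 = halfpTau j % 2) : k = j := by
  revert j k
  decide

theorem eq_zero_of_int_add_int_mul_eq_zero (hτ : 0 < τ.im) {a b : ℤ} (h : (a : ℂ) + b * τ = 0) :
    a = 0 ∧ b = 0 := by
  have hb : b = 0 := by
    have him : (b : ℝ) * τ.im = 0 := by simpa using congrArg Complex.im h
    exact_mod_cast (mul_eq_zero.1 him).resolve_right hτ.ne'
  have ha : (a : ℂ) = 0 := by simpa [hb] using h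
  exact ⟨by exact_mod_cast ha, hb⟩

theorem not_inLattice_halfp_sub_halfp (hτ : 0 < τ.im) {j k : Fin 4} (hjk : k ≠ j) :
    ¬ InLattice τ (halfp τ k / 2 - halfp τ j / 2) := by
  rintro ⟨a, b, h⟩
  rw [halfp_eq, halfp_eq] at h
  obtain ⟨ha, hb⟩ := eq_zero_of_int_add_int_mul_eq_zero hτ
    (a := halfpOne k - halfpOne j - 2 * a) (b := halfpTau k - halfpTau j - 2 * b) (by
      push_cast
      linear_combination 2 * h)
  exact hjk (halfpOne_halfpTau_injective_mod_two (by omega) (by omega))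

end HalfPeriods

section LamePotential

/-- The polar data of the generalized Lamé potential: `Sum.inl k` stands for the half-period
`-ω_k / 2`, and `Sum.inr true`, `Sum.inr false` for `p` and `-p`. -/
def lamePolarData (n : Fin 4 → ℂ) (p A : ℂ → ℂ) : PolarData (Fin 4 ⊕ Bool) where
  double := Sum.elim (fun k => n k * (n k + 1)) fun _ => 3 / 4
  residue := Sum.elim (fun _ _ => 0) fun b => bif b then fun t => -A t else A
  pole := Sum.elim (fun k t => -(halfp t k / 2)) fun b => bif b then p else fun t => -p t

/-- The generalized Lamé potential with parameters depending on `τ`. -/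
def lamePotential (n : Fin 4 → ℂ) (zeta : ℂ → ℂ → ℂ) (p A B : ℂ → ℂ) (τ z : ℂ) : ℂ :=
  Ipot n zeta (A τ) (B τ) (p τ) τ z

variable {n : Fin 4 → ℂ} {zeta : ℂ → ℂ → ℂ} {p A B : ℂ → ℂ} {τ z : ℂ}

theorem sum_univ_erase_inr_true {κ M : Type*} [Fintype κ] [DecidableEq κ] [AddCommGroup M]
    (f : κ ⊕ Bool → M) :
    ∑ i ∈ Finset.univ.erase (Sum.inr true), f i = (∑ k, f (Sum.inl k)) + f (Sum.inr false) := by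
  rw [Finset.sum_erase_eq_sub (Finset.mem_univ _), Fintype.sum_sum_type, Fintype.sum_bool]
  abel

theorem lamePotential_eq_ellipticSum_add (τ z : ℂ) : lamePotential n zeta p A B τ z =
    (lamePolarData n p A).ellipticSum zeta Finset.univ τ z + B τ := by
  simp only [lamePotential, Ipot, PolarData.ellipticSum, Fintype.sum_sum_type, Fintype.sum_bool,
    lamePolarData, Sum.elim_inl, Sum.elim_inr, cond_true, cond_false, sub_neg_eq_add, zero_mul,
    add_zero]
  ring

theorem sum_residue_lamePolarData (τ : ℂ) : ∑ i, (lamePolarData n p A).residue i τ = 0 := by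
  simp only [Fintype.sum_sum_type, Fintype.sum_bool, lamePolarData, Sum.elim_inl, Sum.elim_inr,
    cond_true, cond_false, Finset.sum_const_zero, zero_add, neg_add_cancel]

theorem offPoles_lamePolarData_iff : (lamePolarData n p A).OffPoles Finset.univ τ z ↔
    ¬ InLattice τ (z - p τ) ∧ ¬ InLattice τ (z + p τ) ∧
      ∀ k, ¬ InLattice τ (z + halfp τ k / 2) := by
  simp only [PolarData.OffPoles, Finset.mem_univ, forall_const, Sum.forall, Bool.forall_bool,
    lamePolarData, Sum.elim_inl, Sum.elim_inr, cond_true, cond_false, sub_neg_eq_add]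
  tauto

theorem lamePotential_neg (hzeta : IsWeierstrassZeta zeta) (hτ : 0 < τ.im) (z : ℂ) :
    lamePotential n zeta p A B τ (-z) = lamePotential n zeta p A B τ z := by
  have hhalf : ∀ k, wp τ (-z + halfp τ k / 2) = wp τ (z + halfp τ k / 2) := fun k => by
    rw [← wp_neg hτ, ← wp_add_of_inLattice hτ (inLattice_halfp τ k)]
    congr 1
    ring
  have hadd : -z + p τ = -(z - p τ) := by ring
  have hsub : -z - p τ = -(z + p τ) := by ring
  simp only [lamePotential, Ipot, hhalf, hadd, hsub, wp_neg hτ, (hzeta τ hτ).1]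
  ring

theorem lamePotential_add_int_add_int_mul {eta1 : ℂ → ℂ} (hzeta : IsWeierstrassZeta zeta)
    (heta1 : IsEta1 zeta eta1) (hτ : 0 < τ.im)
    (h : (lamePolarData n p A).OffPoles Finset.univ τ z) (a b : ℤ) :
    lamePotential n zeta p A B τ (z + (a + b * τ)) = lamePotential n zeta p A B τ z := by
  rw [lamePotential_eq_ellipticSum_add, lamePotential_eq_ellipticSum_add,
    PolarData.ellipticSum_add_int_add_int_mul hzeta heta1 hτ h, sum_residue_lamePolarData, zero_mul,
    add_zero]

end LamePotential

section Drift

/-- The factor `-i / (4π)` of the Hamiltonian system. -/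
def driftScale : ℂ := -Complex.I / (4 * Real.pi)

/-- The coefficient `Ω` of the `τ`-flow of the Lamé equation. -/
def drift (zeta : ℂ → ℂ → ℂ) (eta1 p : ℂ → ℂ) (τ z : ℂ) : ℂ :=
  driftScale * (zeta τ (z - p τ) + zeta τ (z + p τ) - 2 * z * eta1 τ)

variable {zeta : ℂ → ℂ → ℂ} {eta1 p : ℂ → ℂ} {τ z : ℂ}

theorem drift_neg (hzeta : IsWeierstrassZeta zeta) (hτ : 0 < τ.im) (z : ℂ) :
    drift zeta eta1 p τ (-z) = -drift zeta eta1 p τ z := by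
  have hadd : -z + p τ = -(z - p τ) := by ring
  have hsub : -z - p τ = -(z + p τ) := by ring
  simp only [drift, hadd, hsub, (hzeta τ hτ).1]
  ring

theorem drift_add_int_add_int_mul (hzeta : IsWeierstrassZeta zeta) (heta1 : IsEta1 zeta eta1)
    (hτ : 0 < τ.im) (hsub : ¬ InLattice τ (z - p τ)) (hadd : ¬ InLattice τ (z + p τ)) (a b : ℤ) :
    drift zeta eta1 p τ (z + (a + b * τ)) = drift zeta eta1 p τ z - b := by
  have hscale : driftScale * (4 * Real.pi * I) = 1 := by
    have hpi : (Real.pi : ℂ) ≠ 0 := by exact_mod_cast Real.pi_ne_zero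
    rw [driftScale]
    field_simp
    rw [I_sq, neg_neg]
  rw [drift, drift, add_sub_right_comm z, add_right_comm z _ (p τ),
    hzeta.add_int_add_int_mul heta1 hτ hsub, hzeta.add_int_add_int_mul heta1 hτ hadd]
  linear_combination -(b : ℂ) * hscale

theorem analyticAt_drift (hzeta : IsWeierstrassZeta zeta) (hτ : 0 < τ.im)
    (hsub : ¬ InLattice τ (z - p τ)) (hadd : ¬ InLattice τ (z + p τ)) :
    AnalyticAt ℂ (drift zeta eta1 p τ) z := by
  rw [Complex.analyticAt_iff_eventually_differentiableAt]
  have hopen := isOpen_not_inLattice hτ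
  filter_upwards [(hopen.preimage (continuous_sub_right (p τ))).mem_nhds hsub,
    (hopen.preimage (continuous_add_const (p τ))).mem_nhds hadd] with y hysub hyadd
  exact ((((((hzeta τ hτ).2.1 _ hysub).comp_sub_const y (p τ)).fun_add
    (((hzeta τ hτ).2.1 _ hyadd).comp_add_const y (p τ))).differentiableAt).fun_sub
    (by fun_prop)).const_mul driftScale

end Drift

end

noncomputable section

/-- The regularity assumptions at `τ` on the parameters `(p, A, B)` of the generalized Lamé
potential, together with the formula for `B`, which makes `z = p` an apparent singularity. -/
structure IsLameFamily (n : Fin 4 → ℂ) (zeta : ℂ → ℂ → ℂ) (eta1 p A B : ℂ → ℂ) (τ : ℂ) :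
    Prop where
  isZeta : IsWeierstrassZeta zeta
  isEta1 : IsEta1 zeta eta1
  im_pos : 0 < τ.im
  analytic_p : AnalyticAt ℂ p τ
  analytic_A : AnalyticAt ℂ A τ
  two_mul : ¬ InLattice τ (2 * p τ)
  half : ∀ k, ¬ InLattice τ (p τ + halfp τ k / 2)
  B_eq : ∀ t, B t = A t ^ 2 - zeta t (2 * p t) * A t - (3 / 4) * wp t (2 * p t)
    - ∑ k, n k * (n k + 1) * wp t (p t + halfp t k / 2)

section RegularParts

variable (n : Fin 4 → ℂ) (zeta : ℂ → ℂ → ℂ) (eta1 p A B : ℂ → ℂ)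

/-- The regular part of `lamePotential` at the pole `j`, as a function of `τ` and of the distance
to the pole. -/
def lameRegularPart (j : Fin 4 ⊕ Bool) (y : ℂ × ℂ) : ℂ :=
  (lamePolarData n p A).regularPart zeta j y + B y.1

/-- The regular part of `drift` at `p`, as a function of the distance to `p`. -/
def driftRegularPart (τ w : ℂ) : ℂ :=
  driftScale * (zeta τ w - w⁻¹ + zeta τ (2 * p τ + w) - 2 * (p τ + w) * eta1 τ)

variable {n zeta eta1 p A B}

theorem lamePotential_pole_add (j : Fin 4 ⊕ Bool) (t w : ℂ) :
    lamePotential n zeta p A B t ((lamePolarData n p A).pole j t + w) =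
      (lamePolarData n p A).double j * w⁻¹ ^ 2 + (lamePolarData n p A).residue j t * w⁻¹
        + lameRegularPart n zeta p A B j (t, w) := by
  rw [lamePotential_eq_ellipticSum_add, PolarData.ellipticSum_univ_pole_add, lameRegularPart,
    add_assoc]

theorem drift_p_add (τ w : ℂ) : drift zeta eta1 p τ (p τ + w) =
    driftScale * w⁻¹ + driftRegularPart zeta eta1 p τ w := by
  rw [drift, driftRegularPart, add_sub_cancel_left, add_right_comm, ← _root_.two_mul]
  ring

end RegularParts

namespace IsLameFamily

variable {n : Fin 4 → ℂ} {zeta : ℂ → ℂ → ℂ} {eta1 p A B : ℂ → ℂ} {τ z : ℂ} {m : ℕ}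

theorem contDiffAt_residue (h : IsLameFamily n zeta eta1 p A B τ) (i : Fin 4 ⊕ Bool) :
    ContDiffAt ℂ m ((lamePolarData n p A).residue i) τ := by
  rcases i with _ | _ | _
  · exact contDiffAt_const
  · exact h.analytic_A.contDiffAt
  · exact h.analytic_A.contDiffAt.neg

theorem contDiffAt_pole (h : IsLameFamily n zeta eta1 p A B τ) (i : Fin 4 ⊕ Bool) :
    ContDiffAt ℂ m ((lamePolarData n p A).pole i) τ := by
  rcases i with k | _ | _
  · exact ((contDiff_halfp k).div_const 2).neg.contDiffAt
  · exact h.analytic_p.contDiffAt.neg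
  · exact h.analytic_p.contDiffAt

theorem not_inLattice_neg_half_sub (h : IsLameFamily n zeta eta1 p A B τ) (k : Fin 4) :
    ¬ InLattice τ (-(halfp τ k / 2) - p τ) := by
  rw [← neg_add', add_comm, inLattice_neg_iff]
  exact h.half k

theorem not_inLattice_neg_half_add (h : IsLameFamily n zeta eta1 p A B τ) (k : Fin 4) :
    ¬ InLattice τ (-(halfp τ k / 2) + p τ) := by
  rw [← inLattice_add_iff (inLattice_halfp τ k)]
  convert h.half k using 2
  ring

theorem offPoles_erase_half (h : IsLameFamily n zeta eta1 p A B τ) (j : Fin 4) :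
    (lamePolarData n p A).OffPoles (Finset.univ.erase (Sum.inl j)) τ (-(halfp τ j / 2)) := by
  rintro (k | _ | _) hi
  · have hkj : k ≠ j := fun hkj => Finset.ne_of_mem_erase hi (congrArg Sum.inl hkj)
    convert not_inLattice_halfp_sub_halfp h.im_pos hkj using 2
    exact neg_sub_neg _ _
  · convert h.not_inLattice_neg_half_add j using 2
    exact sub_neg_eq_add _ _
  · exact h.not_inLattice_neg_half_sub j

theorem offPoles_erase_p (h : IsLameFamily n zeta eta1 p A B τ) :
    (lamePolarData n p A).OffPoles (Finset.univ.erase (Sum.inr true)) τ (p τ) := by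
  rintro (k | _ | _) hi
  · convert h.half k using 2
    exact sub_neg_eq_add _ _
  · convert h.two_mul using 2
    exact (sub_neg_eq_add _ _).trans (_root_.two_mul _).symm
  · exact absurd hi (Finset.notMem_erase _ _)

theorem eventually_im_pos (h : IsLameFamily n zeta eta1 p A B τ) : ∀ᶠ t in 𝓝 τ, 0 < t.im :=
  continuous_im.continuousAt.eventually_const_lt h.im_pos

theorem lameRegularPart_p_zero (h : IsLameFamily n zeta eta1 p A B τ) {t : ℂ} (ht : 0 < t.im) :
    lameRegularPart n zeta p A B (Sum.inr true) (t, 0) = A t ^ 2 := by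
  rw [lameRegularPart, PolarData.regularPart_zero h.isZeta ht, PolarData.ellipticSum,
    sum_univ_erase_inr_true, h.B_eq]
  simp only [lamePolarData, Sum.elim_inl, Sum.elim_inr, cond_true, cond_false, sub_neg_eq_add,
    zero_mul, add_zero, ← _root_.two_mul]
  ring

theorem contDiffAt_B (h : IsLameFamily n zeta eta1 p A B τ) : ContDiffAt ℂ m B τ := by
  have hpart := (PolarData.contDiffAt_regularPart h.isZeta h.im_pos h.contDiffAt_residue
    h.contDiffAt_pole h.offPoles_erase_p (m := m)).comp τ
    (contDiffAt_id.prodMk (contDiffAt_const (c := (0 : ℂ))))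
  refine ((h.analytic_A.contDiffAt.pow 2).sub hpart).congr_of_eventuallyEq ?_
  filter_upwards [h.eventually_im_pos] with t ht
  exact eq_sub_of_add_eq' (h.lameRegularPart_p_zero ht)

theorem contDiffAt_lameRegularPart (h : IsLameFamily n zeta eta1 p A B τ) {j : Fin 4 ⊕ Bool}
    (hj : (lamePolarData n p A).OffPoles (Finset.univ.erase j) τ ((lamePolarData n p A).pole j τ)) :
    ContDiffAt ℂ m (lameRegularPart n zeta p A B j) (τ, 0) :=
  (PolarData.contDiffAt_regularPart h.isZeta h.im_pos h.contDiffAt_residue h.contDiffAt_pole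
    hj).add (h.contDiffAt_B.comp (τ, (0 : ℂ)) contDiffAt_fst)

theorem contDiffAt_lamePotential (h : IsLameFamily n zeta eta1 p A B τ)
    (hz : (lamePolarData n p A).OffPoles Finset.univ τ z) :
    ContDiffAt ℂ m (fun y : ℂ × ℂ => lamePotential n zeta p A B y.1 y.2) (τ, z) := by
  simp only [lamePotential_eq_ellipticSum_add]
  exact (PolarData.contDiffAt_ellipticSum h.isZeta h.im_pos h.contDiffAt_residue h.contDiffAt_pole
    contDiffAt_snd hz).add (h.contDiffAt_B.comp (τ, z) contDiffAt_fst)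

theorem fderiv_lameRegularPart_p_left (h : IsLameFamily n zeta eta1 p A B τ) :
    fderiv ℂ (lameRegularPart n zeta p A B (Sum.inr true)) (τ, 0) (1, 0) =
      2 * A τ * deriv A τ := by
  have hpartial := hasDerivAt_mk_left
    ((h.contDiffAt_lameRegularPart h.offPoles_erase_p (m := 1)).differentiableAt (by simp))
  have hA : HasDerivAt (fun t => A t ^ 2) (2 * A τ * deriv A τ) τ := by
    simpa using h.analytic_A.differentiableAt.hasDerivAt.fun_pow 2
  exact hpartial.unique (hA.congr_of_eventuallyEq
    (h.eventually_im_pos.mono fun t ht => h.lameRegularPart_p_zero ht))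

theorem fderiv_lameRegularPart_p_right (h : IsLameFamily n zeta eta1 p A B τ) :
    fderiv ℂ (lameRegularPart n zeta p A B (Sum.inr true)) (τ, 0) (0, 1) =
      (∑ k, n k * (n k + 1) * wpd τ (p τ + halfp τ k / 2))
        + 3 / 4 * wpd τ (2 * p τ) - A τ * wp τ (2 * p τ) := by
  have hpartial := hasDerivAt_mk_right
    ((h.contDiffAt_lameRegularPart h.offPoles_erase_p (m := 1)).differentiableAt (by simp))
  refine (hpartial.unique ((PolarData.hasDerivAt_regularPart_zero h.isZeta h.im_pos
    h.offPoles_erase_p).add_const (B τ))).trans ?_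
  rw [sum_univ_erase_inr_true]
  simp only [lamePolarData, Sum.elim_inl, Sum.elim_inr, cond_true, cond_false, sub_neg_eq_add,
    zero_mul, sub_zero, ← _root_.two_mul]
  ring

theorem eventually_hasDerivAt_driftRegularPart (h : IsLameFamily n zeta eta1 p A B τ) :
    ∀ᶠ w in 𝓝 (0 : ℂ), HasDerivAt (driftRegularPart zeta eta1 p τ)
      (driftScale * (-(wp τ w - w⁻¹ ^ 2) - wp τ (2 * p τ + w) - 2 * eta1 τ)) w := by
  have hoffp : ∀ᶠ w in 𝓝 (0 : ℂ), ¬ InLattice τ (2 * p τ + w) :=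
    ((isOpen_not_inLattice h.im_pos).preimage (continuous_const_add (2 * p τ))).mem_nhds
      (by simpa using! h.two_mul)
  filter_upwards [hoffp, (tendsto_mk_right τ 0).eventually
    (eventually_offPeriods (offPeriods_zero h.im_pos))] with w hw hoff
  refine (((h.isZeta.hasDerivAt_sub_inv hoff).fun_add
    (((h.isZeta τ h.im_pos).2.1 _ hw).comp_const_add (2 * p τ) w)).fun_sub
    ((((hasDerivAt_id' w).const_add (p τ)).const_mul 2).mul_const (eta1 τ))).const_mul driftScale
    |>.congr_deriv ?_
  ring

theorem analyticAt_driftRegularPart (h : IsLameFamily n zeta eta1 p A B τ) :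
    AnalyticAt ℂ (driftRegularPart zeta eta1 p τ) 0 := by
  rw [Complex.analyticAt_iff_eventually_differentiableAt]
  exact h.eventually_hasDerivAt_driftRegularPart.mono fun w hw => hw.differentiableAt

theorem driftRegularPart_zero (h : IsLameFamily n zeta eta1 p A B τ) :
    driftRegularPart zeta eta1 p τ 0 =
      driftScale * (zeta τ (2 * p τ) - 2 * p τ * eta1 τ) := by
  simp only [driftRegularPart, h.isZeta.apply_zero h.im_pos, inv_zero, add_zero, sub_zero, zero_add]

theorem deriv_driftRegularPart_zero (h : IsLameFamily n zeta eta1 p A B τ) :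
    deriv (driftRegularPart zeta eta1 p τ) 0 =
      driftScale * (-wp τ (2 * p τ) - 2 * eta1 τ) := by
  rw [h.eventually_hasDerivAt_driftRegularPart.self_of_nhds.deriv]
  simp only [wp_zero, inv_zero, add_zero]
  ring

theorem deriv_deriv_driftRegularPart_zero (h : IsLameFamily n zeta eta1 p A B τ) :
    deriv (deriv (driftRegularPart zeta eta1 p τ)) 0 = driftScale * -wpd τ (2 * p τ) := by
  have hderiv : deriv (driftRegularPart zeta eta1 p τ) =ᶠ[𝓝 0] fun w =>
      driftScale * (-(wp τ w - w⁻¹ ^ 2) - wp τ (2 * p τ + w) - 2 * eta1 τ) :=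
    h.eventually_hasDerivAt_driftRegularPart.mono fun w hw => hw.deriv
  have hwp : HasDerivAt (fun w => wp τ (2 * p τ + w)) (wpd τ (2 * p τ)) 0 := by
    simpa using (hasDerivAt_wp h.im_pos (by simpa using h.two_mul)).comp_const_add (2 * p τ) 0
  rw [hderiv.deriv_eq, ((((hasDerivAt_wp_sub_inv_sq_zero h.im_pos).fun_neg.fun_sub hwp).sub_const
    (2 * eta1 τ)).const_mul driftScale).deriv, neg_zero, zero_sub]

end IsLameFamily

end

noncomputable section

/-- The prescribed value of `p'` in the Hamiltonian system. -/
def hamVelocity (zeta : ℂ → ℂ → ℂ) (eta1 p A : ℂ → ℂ) (τ : ℂ) : ℂ :=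
  -Complex.I / (4 * Real.pi) * (2 * A τ - zeta τ (2 * p τ) + 2 * p τ * eta1 τ)

/-- The prescribed value of `A'` in the Hamiltonian system. -/
def hamForce (n : Fin 4 → ℂ) (eta1 p A : ℂ → ℂ) (τ : ℂ) : ℂ :=
  Complex.I / (4 * Real.pi) *
    ((2 * wp τ (2 * p τ) + 2 * eta1 τ) * A τ - (3 / 2) * wpd τ (2 * p τ)
      - ∑ k, n k * (n k + 1) * wpd τ (p τ + halfp τ k / 2))

/-- The function `U`: the defect of the generalized Lamé potential along `drift`. -/
def lameDefect (n : Fin 4 → ℂ) (zeta : ℂ → ℂ → ℂ) (eta1 p A B : ℂ → ℂ) (τ z : ℂ) : ℂ :=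
  defect (lamePotential n zeta p A B) (drift zeta eta1 p τ) τ z

namespace IsLameFamily

variable {n : Fin 4 → ℂ} {zeta : ℂ → ℂ → ℂ} {eta1 p A B : ℂ → ℂ} {τ z : ℂ}

theorem exists_lameDefect_expansion_at_p (h : IsLameFamily n zeta eta1 p A B τ) :
    ∃ E : ℂ → ℂ,
      Tendsto E (𝓝[≠] 0) (𝓝 (4 * A τ * (deriv A τ - hamForce n eta1 p A τ)
        - 2 * fderiv ℂ (lameRegularPart n zeta p A B (Sum.inr true)) (τ, 0) (0, 1)
          * (deriv p τ - hamVelocity zeta eta1 p A τ))) ∧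
      ∀ᶠ w in 𝓝[≠] (0 : ℂ), lameDefect n zeta eta1 p A B τ (p τ + w) =
        3 * (deriv p τ - hamVelocity zeta eta1 p A τ) * w⁻¹ ^ 3
        - 2 * A τ * (deriv p τ - hamVelocity zeta eta1 p A τ) * w⁻¹ ^ 2
        - 2 * (deriv A τ - hamForce n eta1 p A τ) * w⁻¹ + E w := by
  have hforce : Complex.I / (4 * (Real.pi : ℂ)) = -driftScale := by
    rw [driftScale, neg_div, neg_neg]
  obtain ⟨E, hlim, hexp⟩ := exists_defect_expansion_of_polar
    (h.contDiffAt_lameRegularPart h.offPoles_erase_p (m := 2))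
    h.analytic_p.differentiableAt.hasDerivAt h.analytic_A.differentiableAt.hasDerivAt.fun_neg
    (lamePotential_pole_add (Sum.inr true)) h.analyticAt_driftRegularPart
    (drift_p_add (eta1 := eta1) τ)
  rw [h.lameRegularPart_p_zero h.im_pos, h.fderiv_lameRegularPart_p_right, h.driftRegularPart_zero,
    h.deriv_driftRegularPart_zero, h.deriv_deriv_driftRegularPart_zero] at hlim hexp
  rw [h.fderiv_lameRegularPart_p_left] at hlim
  rw [h.fderiv_lameRegularPart_p_right, hamForce, hamVelocity, hforce, ← driftScale]
  refine ⟨E, hlim.trans_eq (congrArg 𝓝 ?_), hexp.mono fun w hw => hw.trans ?_⟩ <;>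
    simp only [lamePolarData, Sum.elim_inr] <;> ring

theorem differentiableAt_lameDefect (h : IsLameFamily n zeta eta1 p A B τ)
    (hz : (lamePolarData n p A).OffPoles Finset.univ τ z) :
    DifferentiableAt ℂ (lameDefect n zeta eta1 p A B τ) z := by
  obtain ⟨hsub, hadd, -⟩ := offPoles_lamePolarData_iff.1 hz
  exact differentiableAt_defect (h.contDiffAt_lamePotential hz (m := 2))
    (analyticAt_drift h.isZeta h.im_pos hsub hadd)

theorem lameDefect_neg (h : IsLameFamily n zeta eta1 p A B τ) (z : ℂ) :
    lameDefect n zeta eta1 p A B τ (-z) = lameDefect n zeta eta1 p A B τ z :=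
  defect_neg (h.eventually_im_pos.mono fun _ ht => lamePotential_neg h.isZeta ht)
    (drift_neg h.isZeta h.im_pos)

theorem lameDefect_add (h : IsLameFamily n zeta eta1 p A B τ) {l : ℂ} (hl : InLattice τ l)
    (hz : (lamePolarData n p A).OffPoles Finset.univ τ z) :
    lameDefect n zeta eta1 p A B τ (z + l) = lameDefect n zeta eta1 p A B τ z := by
  obtain ⟨a, b, rfl⟩ := hl
  have hq : HasDerivAt (fun t : ℂ => a + b * t) b τ := by
    simpa using ((hasDerivAt_id τ).const_mul (b : ℂ)).const_add (a : ℂ)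
  have hoff := PolarData.eventually_offPoles h.im_pos
    (fun i => (h.contDiffAt_pole i (m := 0)).continuousAt) hz
  have him : ∀ᶠ y : ℂ × ℂ in 𝓝 (τ, z), 0 < y.1.im :=
    (continuousAt_fst (p := (τ, z))).eventually h.eventually_im_pos
  have hJ : ∀ᶠ y : ℂ × ℂ in 𝓝 (τ, z), lamePotential n zeta p A B y.1 (y.2 + (a + b * y.1)) =
      lamePotential n zeta p A B y.1 y.2 := by
    filter_upwards [hoff, him] with y hy hy'
    exact lamePotential_add_int_add_int_mul h.isZeta h.isEta1 hy' hy a b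
  have hW : ∀ᶠ y in 𝓝 z, drift zeta eta1 p τ (y + (a + b * τ)) = drift zeta eta1 p τ y - b := by
    filter_upwards [(tendsto_mk_right τ z).eventually hoff] with y hy
    obtain ⟨hsub, hadd, -⟩ := offPoles_lamePolarData_iff.1 hy
    exact drift_add_int_add_int_mul h.isZeta h.isEta1 h.im_pos hsub hadd a b
  exact defect_add (q := fun t => a + b * t) hq
    ((h.contDiffAt_lamePotential hz (m := 1)).differentiableAt one_ne_zero) hJ hW

theorem tendsto_lameDefect_add (h : IsLameFamily n zeta eta1 p A B τ) {l : ℂ}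
    (hl : InLattice τ l) {L : Filter ℂ}
    (hL : Tendsto (lameDefect n zeta eta1 p A B τ) (𝓝[≠] z) L) :
    Tendsto (lameDefect n zeta eta1 p A B τ) (𝓝[≠] (z + l)) L := by
  rw [← map_add_right_nhdsNE, tendsto_map'_iff]
  refine hL.congr' ?_
  filter_upwards [PolarData.eventually_offPoles_nhdsNE h.im_pos z] with y hy
  exact (h.lameDefect_add hl hy).symm

theorem tendsto_lameDefect_neg (h : IsLameFamily n zeta eta1 p A B τ) {L : Filter ℂ}
    (hL : Tendsto (lameDefect n zeta eta1 p A B τ) (𝓝[≠] z) L) :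
    Tendsto (lameDefect n zeta eta1 p A B τ) (𝓝[≠] (-z)) L := by
  have hmap : map (fun y => -y) (𝓝[≠] z) = 𝓝[≠] (-z) :=
    (Homeomorph.neg ℂ).map_punctured_nhds_eq z
  rw [← hmap, tendsto_map'_iff]
  exact hL.congr fun y => (h.lameDefect_neg y).symm

theorem eventually_drift_half_odd (h : IsLameFamily n zeta eta1 p A B τ) (j : Fin 4) :
    ∀ᶠ w in 𝓝 (0 : ℂ), drift zeta eta1 p τ (-(halfp τ j / 2) + -w) + -(halfpTau j / 2) =
      -(drift zeta eta1 p τ (-(halfp τ j / 2) + w) + -(halfpTau j / 2)) := by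
  have hopen := isOpen_not_inLattice h.im_pos
  have hcont_sub : Continuous fun w => -(halfp τ j / 2) + w - p τ := by fun_prop
  have hcont_add : Continuous fun w => -(halfp τ j / 2) + w + p τ := by fun_prop
  filter_upwards [(hopen.preimage hcont_sub).mem_nhds
      (by simpa using! h.not_inLattice_neg_half_sub j),
    (hopen.preimage hcont_add).mem_nhds
      (by simpa using! h.not_inLattice_neg_half_add j)] with w hsub hadd
  have hreflect : -(halfp τ j / 2) + -w =
      -(-(halfp τ j / 2) + w + (halfpOne j + halfpTau j * τ)) := by
    rw [← halfp_eq]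
    ring
  rw [hreflect, drift_neg h.isZeta h.im_pos,
    drift_add_int_add_int_mul h.isZeta h.isEta1 h.im_pos hsub hadd]
  ring

theorem exists_tendsto_lameDefect_half (h : IsLameFamily n zeta eta1 p A B τ) (j : Fin 4) :
    ∃ L, Tendsto (lameDefect n zeta eta1 p A B τ) (𝓝[≠] (-(halfp τ j / 2))) (𝓝 L) := by
  have hJ : ∀ t w, lamePotential n zeta p A B t (-(halfp t j / 2) + w) =
      n j * (n j + 1) * w⁻¹ ^ 2 + lameRegularPart n zeta p A B (Sum.inl j) (t, w) := fun t w =>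
    (lamePotential_pole_add (Sum.inl j) t w).trans (by
      simp only [lamePolarData, Sum.elim_inl, zero_mul, add_zero])
  have hW : AnalyticAt ℂ (fun w => drift zeta eta1 p τ (-(halfp τ j / 2) + w)) 0 :=
    AnalyticAt.fun_comp (g := drift zeta eta1 p τ) (analyticAt_drift h.isZeta h.im_pos
      (by simpa using h.not_inLattice_neg_half_sub j)
      (by simpa using h.not_inLattice_neg_half_add j)) (analyticAt_const.add analyticAt_id)
  obtain ⟨L, hL⟩ := exists_tendsto_defect_of_eventually_odd
    (h.contDiffAt_lameRegularPart (h.offPoles_erase_half j) (m := 2))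
    ((hasDerivAt_halfp τ j).div_const 2).fun_neg hJ hW (h.eventually_drift_half_odd j)
  exact ⟨L, tendsto_comp_add_left_nhdsNE_zero.1 hL⟩

theorem tendsto_lameDefect_p (h : IsLameFamily n zeta eta1 p A B τ)
    (hp : deriv p τ = hamVelocity zeta eta1 p A τ) (hA : deriv A τ = hamForce n eta1 p A τ) :
    Tendsto (lameDefect n zeta eta1 p A B τ) (𝓝[≠] (p τ)) (𝓝 0) := by
  obtain ⟨E, hlim, hexp⟩ := h.exists_lameDefect_expansion_at_p
  simp only [hp, hA, sub_self, mul_zero, zero_mul, zero_add] at hlim hexp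
  rw [← tendsto_comp_add_left_nhdsNE_zero]
  exact hlim.congr' (hexp.mono fun w hw => hw.symm)

theorem exists_tendsto_lameDefect (h : IsLameFamily n zeta eta1 p A B τ) {L : ℂ}
    (hp : Tendsto (lameDefect n zeta eta1 p A B τ) (𝓝[≠] (p τ)) (𝓝 L)) (z : ℂ) :
    ∃ L, Tendsto (lameDefect n zeta eta1 p A B τ) (𝓝[≠] z) (𝓝 L) := by
  by_cases hz : (lamePolarData n p A).OffPoles Finset.univ τ z
  · exact ⟨_, (h.differentiableAt_lameDefect hz).continuousAt.tendsto.mono_left nhdsWithin_le_nhds⟩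
  rw [PolarData.OffPoles] at hz
  push Not at hz
  obtain ⟨k | _ | _, -, hl⟩ := hz
  · obtain ⟨L', hL'⟩ := h.exists_tendsto_lameDefect_half k
    exact ⟨L', add_sub_cancel _ z ▸ h.tendsto_lameDefect_add hl hL'⟩
  · exact ⟨L, add_sub_cancel _ z ▸ h.tendsto_lameDefect_add hl (h.tendsto_lameDefect_neg hp)⟩
  · exact ⟨L, add_sub_cancel _ z ▸ h.tendsto_lameDefect_add hl hp⟩

theorem lameDefect_eq_zero (h : IsLameFamily n zeta eta1 p A B τ)
    (hp : deriv p τ = hamVelocity zeta eta1 p A τ) (hA : deriv A τ = hamForce n eta1 p A τ)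
    (hz : (lamePolarData n p A).OffPoles Finset.univ τ z) :
    lameDefect n zeta eta1 p A B τ z = 0 := by
  have hlim := h.tendsto_lameDefect_p hp hA
  have hoff := PolarData.eventually_offPoles_nhdsNE (P := lamePolarData n p A) (F := Finset.univ)
    h.im_pos
  exact eq_zero_of_doublyPeriodic_of_tendsto h.im_pos
    (fun x => (hoff x).mono fun _ hy => h.differentiableAt_lameDefect hy)
    (h.exists_tendsto_lameDefect hlim)
    (fun l hl x => (hoff x).mono fun _ hy => h.lameDefect_add hl hy) hlim
    (h.differentiableAt_lameDefect hz).continuousAt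

theorem hamiltonian_of_lameDefect_eq_zero (h : IsLameFamily n zeta eta1 p A B τ)
    (hzero : ∀ z, (lamePolarData n p A).OffPoles Finset.univ τ z →
      lameDefect n zeta eta1 p A B τ z = 0) :
    deriv p τ = hamVelocity zeta eta1 p A τ ∧ deriv A τ = hamForce n eta1 p A τ := by
  obtain ⟨E, hlim, hexp⟩ := h.exists_lameDefect_expansion_at_p
  have hnear : ∀ᶠ w in 𝓝[≠] (0 : ℂ), lameDefect n zeta eta1 p A B τ (p τ + w) = 0 := by
    have hoff := (PolarData.eventually_offPoles_nhdsNE h.im_pos (p τ)).mono hzero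
    rw [← zero_add (p τ), ← map_add_right_nhdsNE, eventually_map] at hoff
    simpa only [add_comm, zero_add] using hoff
  obtain ⟨hcube, -, hsimple⟩ := polar_coefficients_eq_zero
    (a₃ := 3 * (deriv p τ - hamVelocity zeta eta1 p A τ))
    (a₂ := -(2 * A τ * (deriv p τ - hamVelocity zeta eta1 p A τ)))
    (a₁ := -(2 * (deriv A τ - hamForce n eta1 p A τ))) hlim (by
      filter_upwards [hexp, hnear] with w hw hw0
      linear_combination hw0 - hw)
  constructor
  · linear_combination hcube / 3
  · linear_combination -hsimple / 2

end IsLameFamily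

end

theorem U_vanishes_iff_hamiltonian_general
    (n : Fin 4 → ℂ) (zeta : ℂ → ℂ → ℂ) (eta1 : ℂ → ℂ)
    (hzeta : IsWeierstrassZeta zeta) (heta1 : IsEta1 zeta eta1)
    (V : Set ℂ) (hVH : ∀ τ ∈ V, 0 < τ.im)
    (p A : ℂ → ℂ) (hp : AnalyticOnNhd ℂ p V) (hA : AnalyticOnNhd ℂ A V)
    (hreg : ∀ τ ∈ V, ¬ InLattice τ (2 * p τ) ∧
      ∀ k : Fin 4, ¬ InLattice τ (p τ + halfp τ k / 2))
    (B : ℂ → ℂ)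
    (hB : ∀ τ, B τ = A τ ^ 2 - zeta τ (2 * p τ) * A τ - (3 / 4) * wp τ (2 * p τ)
      - ∑ k : Fin 4, n k * (n k + 1) * wp τ (p τ + halfp τ k / 2))
    (Ω : ℂ → ℂ → ℂ)
    (hΩ : ∀ τ z, Ω τ z = (-Complex.I / (4 * (Real.pi : ℂ))) *
      (zeta τ (z - p τ) + zeta τ (z + p τ) - 2 * z * eta1 τ))
    (U : ℂ → ℂ → ℂ)
    (hU : ∀ τ z, U τ z = deriv (deriv (deriv (Ω τ))) z
      - 4 * Ipot n zeta (A τ) (B τ) (p τ) τ z * deriv (Ω τ) z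
      - 2 * deriv (fun w => Ipot n zeta (A τ) (B τ) (p τ) τ w) z * Ω τ z
      + 2 * deriv (fun t => Ipot n zeta (A t) (B t) (p t) t z) τ) :
    (∀ τ ∈ V, ∀ z : ℂ, ¬ InLattice τ (z - p τ) → ¬ InLattice τ (z + p τ) →
      (∀ k : Fin 4, ¬ InLattice τ (z + halfp τ k / 2)) → U τ z = 0)
    ↔ HamSystem n zeta eta1 V p A := by
  obtain rfl : Ω = drift zeta eta1 p := by
    funext τ z
    exact hΩ τ z
  have hU_defect : ∀ τ z, U τ z = lameDefect n zeta eta1 p A B τ z := hU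
  have hfamily : ∀ τ ∈ V, IsLameFamily n zeta eta1 p A B τ := fun τ hτ =>
    ⟨hzeta, heta1, hVH τ hτ, hp τ hτ, hA τ hτ, (hreg τ hτ).1, (hreg τ hτ).2, hB⟩
  constructor
  · intro hzero τ hτ
    obtain ⟨hp', hA'⟩ := (hfamily τ hτ).hamiltonian_of_lameDefect_eq_zero fun z hz =>
      have ⟨hsub, hadd, hhalf⟩ := offPoles_lamePolarData_iff.1 hz
      (hU_defect τ z).symm.trans (hzero τ hτ z hsub hadd hhalf)
    exact ⟨(hp τ hτ).differentiableAt.hasDerivAt.congr_deriv hp',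
      (hA τ hτ).differentiableAt.hasDerivAt.congr_deriv hA'⟩
  · intro hham τ hτ z hsub hadd hhalf
    rw [hU_defect]
    exact (hfamily τ hτ).lameDefect_eq_zero (hham τ hτ).1.deriv (hham τ hτ).2.deriv
      (offPoles_lamePolarData_iff.2 ⟨hsub, hadd, hhalf⟩)

/-- Theorem 2.9, analytic core: `U ≡ 0` away from the singular set if and
only if `(p, A)` satisfies the Hamiltonian system. -/
theorem U_vanishes_iff_hamiltonian
    (n : Fin 4 → ℂ) (zeta : ℂ → ℂ → ℂ) (eta1 : ℂ → ℂ)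
    (hzeta : IsWeierstrassZeta zeta) (heta1 : IsEta1 zeta eta1)
    (V : Set ℂ) (hVopen : IsOpen V) (hVconn : IsConnected V)
    (hVH : ∀ τ ∈ V, 0 < τ.im)
    (p A : ℂ → ℂ)
    (hpdiff : DifferentiableOn ℂ p V) (hAdiff : DifferentiableOn ℂ A V)
    (hreg : ∀ τ ∈ V, ¬ InLattice τ (2 * p τ) ∧
      ∀ k : Fin 4, ¬ InLattice τ (p τ + halfp τ k / 2))
    (B : ℂ → ℂ)
    (hB : ∀ τ, B τ = A τ ^ 2 - zeta τ (2 * p τ) * A τ - (3 / 4) * wp τ (2 * p τ)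
      - ∑ k : Fin 4, n k * (n k + 1) * wp τ (p τ + halfp τ k / 2))
    (Ω : ℂ → ℂ → ℂ)
    (hΩ : ∀ τ z, Ω τ z = (-Complex.I / (4 * (Real.pi : ℂ))) *
      (zeta τ (z - p τ) + zeta τ (z + p τ) - 2 * z * eta1 τ))
    (U : ℂ → ℂ → ℂ)
    (hU : ∀ τ z, U τ z = deriv (deriv (deriv (Ω τ))) z
      - 4 * Ipot n zeta (A τ) (B τ) (p τ) τ z * deriv (Ω τ) z
      - 2 * deriv (fun w => Ipot n zeta (A τ) (B τ) (p τ) τ w) z * Ω τ z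
      + 2 * deriv (fun t => Ipot n zeta (A t) (B t) (p t) t z) τ) :
    (∀ τ ∈ V, ∀ z : ℂ, ¬ InLattice τ (z - p τ) → ¬ InLattice τ (z + p τ) →
      (∀ k : Fin 4, ¬ InLattice τ (z + halfp τ k / 2)) → U τ z = 0)
    ↔ HamSystem n zeta eta1 V p A :=
  U_vanishes_iff_hamiltonian_general n zeta eta1 hzeta heta1 V hVH p A (hpdiff.analyticOnNhd hVopen)
    (hAdiff.analyticOnNhd hVopen) hreg B hB Ω hΩ U hU
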